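/- arXiv:0805.1493 — 2 statements merged into one kernel-verified Lean document; each statement's English description precedes it below -/
import Mathlib

section
/- In the setting below, assume additionally that the closure of Per_H equals M and that δ ∈ (0, ν) is such that X_δ has finitely many maximal chains that are pairwise disjoint, each accumulating at x. Let p ∈ X_δ, write [p] for the maximal chain of X_δ containing p and S_{[p]} = closure(⋃_{q∈[p]} Ŝ_q). Then for every z ∈ ∂S_{[p]} ∩ B_δ(x) and every ρ > 0 there exists an open neighborhood V of z such that for every q ∈ [p] ∩ V one has S_{[p]} ∩ closure(B_δ(x)) ⊆ Ŝ_q ∪ B_ρ(∂S_{[p]}), where B_ρ(A) = {w : dist(w, A) < ρ} and ∂ denotes the topological frontier in M. -/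
open Metric Set

variable {M : Type*} [MetricSpace M]

/-- Iterates of a homeomorphism, indexed by `ℤ`. -/
def iterZ (f : M ≃ₜ M) (k : ℤ) (x : M) : M := (f.toEquiv ^ k) x

/-- `f` is expansive with expansivity constant `α`. -/
def IsExpansive (f : M ≃ₜ M) (α : ℝ) : Prop :=
  ∀ x y : M, x ≠ y → ∃ k : ℤ, α < dist (iterZ f k x) (iterZ f k y)

/-- Stable set of `x`. -/
def Ws (f : M ≃ₜ M) (x : M) : Set M :=
  {y | Filter.Tendsto (fun k : ℤ => dist (iterZ f k x) (iterZ f k y)) Filter.atTop (nhds 0)}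

/-- Unstable set of `x`. -/
def Wu (f : M ≃ₜ M) (x : M) : Set M :=
  {y | Filter.Tendsto (fun k : ℤ => dist (iterZ f k x) (iterZ f k y)) Filter.atBot (nhds 0)}

/-- Local (`ε`-local) stable set of `x`. -/
def WsLoc (f : M ≃ₜ M) (ε : ℝ) (x : M) : Set M :=
  {y | ∀ k : ℤ, 0 ≤ k → dist (iterZ f k x) (iterZ f k y) ≤ ε}

/-- Local (`ε`-local) unstable set of `x`. -/
def WuLoc (f : M ≃ₜ M) (ε : ℝ) (x : M) : Set M :=
  {y | ∀ k : ℤ, k ≤ 0 → dist (iterZ f k x) (iterZ f k y) ≤ ε}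

/-- The model space `ℝ^r × ℝ^{n-r}`. -/
abbrev ModelSp (n r : ℕ) := (Fin r → ℝ) × (Fin (n - r) → ℝ)

/-- The model hyperbolic linear map `L(a,b) = (a/2, 2b)`. -/
noncomputable def modelL (n r : ℕ) : ModelSp n r → ModelSp n r :=
  fun q => (fun i => q.1 i / 2, fun i => 2 * q.2 i)

/-- Topologically hyperbolic periodic points of index `r` (`Per_H^r`). -/
def PerHr (f : M ≃ₜ M) (n r : ℕ) : Set M :=
  {p | ∃ l : ℕ, 1 ≤ l ∧ (f.toEquiv ^ l) p = p ∧
    ∃ (U : Set M) (V : Set (ModelSp n r)) (h : U ≃ₜ V),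
      IsOpen U ∧ IsOpen V ∧ (0 : ModelSp n r) ∈ V ∧
      ∃ hp : p ∈ U, ((h ⟨p, hp⟩ : V) : ModelSp n r) = 0 ∧
        ∀ z : M, ∀ hz : z ∈ U, ∀ hz' : (f.toEquiv ^ l) z ∈ U,
          ((h ⟨(f.toEquiv ^ l) z, hz'⟩ : V) : ModelSp n r) = modelL n r (h ⟨z, hz⟩)}

/-- All topologically hyperbolic periodic points (`Per_H`). -/
def PerH (f : M ≃ₜ M) (n : ℕ) : Set M := ⋃ r ∈ Finset.range (n + 1), PerHr f n r

/-- `p` admits a local product structure. -/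
def AdmitsLPS (f : M ≃ₜ M) (n : ℕ) (p : M) : Prop :=
  ∃ (k : ℕ) (h : (Fin k → ℝ) × (Fin (n - k) → ℝ) → M) (ε : ℝ),
    0 < ε ∧ Topology.IsEmbedding h ∧ p ∈ Set.range h ∧
    ∀ x : Fin k → ℝ, ∀ y : Fin (n - k) → ℝ,
      h '' ({x} ×ˢ univ) = WsLoc f ε (h (x, y)) ∩ Set.range h ∧
      h '' (univ ×ˢ {y}) = WuLoc f ε (h (x, y)) ∩ Set.range h

/-- `D` has exactly two connected components, namely `V₁` and `V₂`. -/
def TwoComponents {M : Type*} [TopologicalSpace M] (D V₁ V₂ : Set M) : Prop :=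
  V₁ ≠ V₂ ∧
  (∀ y ∈ D, connectedComponentIn D y = V₁ ∨ connectedComponentIn D y = V₂) ∧
  (∃ y ∈ D, connectedComponentIn D y = V₁) ∧ (∃ y ∈ D, connectedComponentIn D y = V₂)

variable {M : Type*} [MetricSpace M]

/-- `S_p = cc_p(W^s(p) ∩ B_ν(x))`. -/
def SpSet (f : M ≃ₜ M) (x : M) (ν : ℝ) (p : M) : Set M :=
  connectedComponentIn (Ws f p ∩ Metric.ball x ν) p

/-- `U_p = cc_p(W^u(p) ∩ B_ν(x))`. -/
def UpSet (f : M ≃ₜ M) (x : M) (ν : ℝ) (p : M) : Set M :=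
  connectedComponentIn (Wu f p ∩ Metric.ball x ν) p

/-- `Ŝ_p = B_ν(x) \ cc_x(B_ν(x) \ S_p)`. -/
def ShatSet (f : M ≃ₜ M) (x : M) (ν : ℝ) (p : M) : Set M :=
  Metric.ball x ν \ connectedComponentIn (Metric.ball x ν \ SpSet f x ν p) x

/-- `X_δ = Per_H^{n-1} ∩ B_δ(x)`. -/
def Xdelta (f : M ≃ₜ M) (n : ℕ) (x : M) (δ : ℝ) : Set M :=
  PerHr f n (n - 1) ∩ Metric.ball x δ

/-- `C` is a chain of `(X_δ, ≤)`, where `p ≤ q ↔ Ŝ_p ⊆ Ŝ_q`. -/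
def IsChainIn (f : M ≃ₜ M) (n : ℕ) (x : M) (ν δ : ℝ) (C : Set M) : Prop :=
  C ⊆ Xdelta f n x δ ∧
  ∀ p ∈ C, ∀ q ∈ C, ShatSet f x ν p ⊆ ShatSet f x ν q ∨ ShatSet f x ν q ⊆ ShatSet f x ν p

/-- `C` is a maximal chain of `(X_δ, ≤)`. -/
def IsMaxChainIn (f : M ≃ₜ M) (n : ℕ) (x : M) (ν δ : ℝ) (C : Set M) : Prop :=
  IsChainIn f n x ν δ C ∧ ∀ C' : Set M, IsChainIn f n x ν δ C' → C ⊆ C' → C' = C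

namespace Stmt15Aux

theorem iterZ_zero {N : Type*} [MetricSpace N] (f : N ≃ₜ N) (y : N) : iterZ f 0 y = y := by
  simp [iterZ]

theorem iterZ_add {N : Type*} [MetricSpace N] (f : N ≃ₜ N) (a b : ℤ) (y : N) :
    iterZ f (a + b) y = iterZ f a (iterZ f b y) := by
  simp [iterZ, zpow_add]

theorem iterZ_nat {N : Type*} [MetricSpace N] (f : N ≃ₜ N) (l : ℕ) (y : N) :
    iterZ f (l : ℤ) y = (f.toEquiv ^ l) y := by
  simp [iterZ]

theorem iterZ_cont {N : Type*} [MetricSpace N] (f : N ≃ₜ N) (k : ℤ) :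
    Continuous (iterZ f k) := by
  have h1 : Continuous (iterZ f 1) := by
    have : iterZ f 1 = f := by funext y; simp [iterZ]
    rw [this]; exact f.continuous
  have h2 : Continuous (iterZ f (-1)) := by
    have : iterZ f (-1) = f.symm := by
      funext y; simp [iterZ]
    rw [this]; exact f.symm.continuous
  induction k using Int.induction_on with
  | zero =>
    have : iterZ f 0 = id := by funext y; simp [iterZ]
    rw [this]; exact continuous_id
  | succ k ih =>
    have : iterZ f ((k : ℤ) + 1) = iterZ f k ∘ iterZ f 1 := by
      funext y; exact iterZ_add f _ _ y
    rw [this]; exact ih.comp h1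
  | pred k ih =>
    have : iterZ f (-(k : ℤ) - 1) = iterZ f (-k) ∘ iterZ f (-1) := by
      funext y; rw [sub_eq_add_neg]; exact iterZ_add f _ _ y
    rw [this]; exact ih.comp h2

theorem iterZ_inj {N : Type*} [MetricSpace N] (f : N ≃ₜ N) (k : ℤ) :
    Function.Injective (iterZ f k) := fun a b h => by
  have := congrArg (iterZ f (-k)) h
  simpa [← iterZ_add, iterZ_zero] using this

theorem iterZ_symm {N : Type*} [MetricSpace N] (f : N ≃ₜ N) (k : ℤ) (y : N) :
    iterZ f.symm k y = iterZ f (-k) y := by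
  have : f.symm.toEquiv = (f.toEquiv)⁻¹ := rfl
  simp [iterZ, this]

/-- Periodicity under multiples of the period. -/
theorem iterZ_per {N : Type*} [MetricSpace N] (f : N ≃ₜ N) (l : ℕ) (d : N)
    (hd : iterZ f (l : ℤ) d = d) (k : ℤ) : iterZ f (l * k) d = d := by
  have hneg : iterZ f (-(l : ℤ)) d = d := by
    conv_lhs => rw [← hd]
    rw [← iterZ_add]; simp [iterZ_zero]
  induction k using Int.induction_on with
  | zero => simp [iterZ_zero]
  | succ k ih => rw [mul_add, mul_one, iterZ_add, hd, ih]
  | pred k ih => rw [mul_sub, mul_one, sub_eq_add_neg, iterZ_add, hneg, ih]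

theorem ws_of_mult {N : Type*} [MetricSpace N] (f : N ≃ₜ N) (l : ℕ) (hl : 1 ≤ l) (d y : N)
    (hd : iterZ f (l : ℤ) d = d)
    (h : Filter.Tendsto (fun k : ℕ => iterZ f (l * (k : ℤ)) y) Filter.atTop (nhds d)) :
    y ∈ Ws f d := by
  show Filter.Tendsto _ _ _
  rw [Metric.tendsto_atTop]
  intro η hη
  have h1 : ∀ᶠ k : ℕ in Filter.atTop, ∀ i ∈ Finset.range l,
      dist (iterZ f (i : ℤ) d) (iterZ f (i : ℤ) (iterZ f (l * (k : ℤ)) y)) < η := by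
    rw [Filter.eventually_all_finset]
    intro i _
    have h2 := ((iterZ_cont f i).tendsto d).comp h
    have h3 := (Metric.tendsto_nhds.1 h2) η hη
    filter_upwards [h3] with k hk
    rw [dist_comm]; exact hk
  obtain ⟨K, hK⟩ := Filter.eventually_atTop.1 h1
  have hl' : (0 : ℤ) < l := by exact_mod_cast hl
  refine ⟨l * K, fun j hj => ?_⟩
  have hq : (K : ℤ) ≤ j / l := by
    rw [Int.le_ediv_iff_mul_le hl']; linarith [mul_comm (K : ℤ) l]
  have hm0 := Int.emod_nonneg j hl'.ne'
  have hm1 := Int.emod_lt_of_pos j hl'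
  have hb := hK (j / l).toNat (by omega) (j % l).toNat (by
    rw [Finset.mem_range]; omega)
  rw [Int.toNat_of_nonneg hm0, Int.toNat_of_nonneg (by omega : (0 : ℤ) ≤ j / l),
    ← iterZ_add, Int.emod_add_mul_ediv] at hb
  have hd2 : iterZ f j d = iterZ f (j % l) d := by
    conv_lhs => rw [← Int.emod_add_mul_ediv j l, iterZ_add, iterZ_per f l d hd]
  rw [hd2, Real.dist_eq, sub_zero, abs_of_nonneg dist_nonneg]
  exact hb

theorem wu_eq {N : Type*} [MetricSpace N] (f : N ≃ₜ N) (d y : N)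
    (h : y ∈ Ws f.symm d) : y ∈ Wu f d := by
  have h' : Filter.Tendsto _ _ _ := h
  show Filter.Tendsto _ _ _
  have := h'.comp Filter.tendsto_neg_atBot_atTop
  refine this.congr (fun k => ?_)
  simp [iterZ_symm]

theorem wu_of_mult {N : Type*} [MetricSpace N] (f : N ≃ₜ N) (l : ℕ) (hl : 1 ≤ l) (d y : N)
    (hd : iterZ f (l : ℤ) d = d)
    (h : Filter.Tendsto (fun k : ℕ => iterZ f (-(l * (k : ℤ))) y) Filter.atTop (nhds d)) :
    y ∈ Wu f d := by
  apply wu_eq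
  apply ws_of_mult f.symm l hl d y
  · rw [iterZ_symm]
    have := iterZ_per f l d hd (-1)
    simpa using this
  · simpa only [iterZ_symm] using h

theorem ws_symm {N : Type*} [MetricSpace N] (f : N ≃ₜ N) {a b : N} (h : b ∈ Ws f a) :
    Ws f b = Ws f a := by
  have key : ∀ a b : N, b ∈ Ws f a → Ws f a ⊆ Ws f b := by
    intro a b h c hc
    have h' : Filter.Tendsto _ _ _ := h
    have hc' : Filter.Tendsto _ _ _ := hc
    show Filter.Tendsto _ _ _
    have hs := h'.add hc'
    rw [add_zero] at hs
    refine squeeze_zero (fun _ => dist_nonneg) (fun k => ?_) hs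
    exact dist_triangle_left _ _ _
  have h2 : a ∈ Ws f b := by
    have h' : Filter.Tendsto _ _ _ := h
    show Filter.Tendsto _ _ _
    simpa only [dist_comm] using h'
  exact (key b a h2).antisymm (key a b h)

theorem ws_self {N : Type*} [MetricSpace N] (f : N ≃ₜ N) (a : N) : a ∈ Ws f a := by
  show Filter.Tendsto _ _ _
  simp

theorem wu_self {N : Type*} [MetricSpace N] (f : N ≃ₜ N) (a : N) : a ∈ Wu f a := by
  show Filter.Tendsto _ _ _
  simp

/-- Local stable sets are contained in stable sets. -/
theorem wsLoc_sub {N : Type*} [MetricSpace N] [CompactSpace N] (f : N ≃ₜ N) (α ε : ℝ)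
    (hexp : IsExpansive f α) (hε : ε ≤ α) (p : N) : WsLoc f ε p ⊆ Ws f p := by
  intro y hy
  show Filter.Tendsto _ _ _
  rw [Metric.tendsto_atTop]
  by_contra hcon
  push Not at hcon
  obtain ⟨η, hη, hcon⟩ := hcon
  choose k hk1 hk2 using fun m : ℕ => hcon (m : ℤ)
  obtain ⟨⟨u, v⟩, -, φ, hφ, hlim⟩ := (isCompact_univ (X := N × N)).tendsto_subseq
    (x := fun m => (iterZ f (k m) p, iterZ f (k m) y)) (fun _ => mem_univ _)
  have hlu : Filter.Tendsto (fun m => iterZ f (k (φ m)) p) Filter.atTop (nhds u) :=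
    (continuous_fst.tendsto _).comp hlim
  have hlv : Filter.Tendsto (fun m => iterZ f (k (φ m)) y) Filter.atTop (nhds v) :=
    (continuous_snd.tendsto _).comp hlim
  have huv : η ≤ dist u v := by
    refine ge_of_tendsto' (hlu.dist hlv) (fun m => ?_)
    have := hk2 (φ m)
    rwa [Real.dist_eq, sub_zero, abs_of_nonneg dist_nonneg] at this
  have hne : u ≠ v := by
    intro h; rw [h, dist_self] at huv; linarith
  obtain ⟨j, hj⟩ := hexp u v hne
  have : dist (iterZ f j u) (iterZ f j v) ≤ ε := by
    refine le_of_tendsto ((((iterZ_cont f j).tendsto u).comp hlu).dist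
      (((iterZ_cont f j).tendsto v).comp hlv)) ?_
    filter_upwards [Filter.eventually_ge_atTop (-j).toNat] with m hm
    have h1 := hk1 (φ m)
    have h2 : m ≤ φ m := hφ.id_le m
    simp only [Function.comp, ← iterZ_add]
    exact hy _ (by omega)
  linarith

theorem wsLoc_closed {N : Type*} [MetricSpace N] (f : N ≃ₜ N) (ε : ℝ) (p : N) :
    IsClosed (WsLoc f ε p) := by
  have : WsLoc f ε p = ⋂ k : ℤ, ⋂ _ : 0 ≤ k, {y | dist (iterZ f k p) (iterZ f k y) ≤ ε} := by
    ext y; simp [WsLoc]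
  rw [this]
  exact isClosed_iInter fun k => isClosed_iInter fun _ =>
    isClosed_le (continuous_const.dist (iterZ_cont f k)) continuous_const

theorem wsPair_closed {N : Type*} [MetricSpace N] (f : N ≃ₜ N) (ε : ℝ) :
    IsClosed {q : N × N | q.2 ∈ WsLoc f ε q.1} := by
  have : {q : N × N | q.2 ∈ WsLoc f ε q.1} =
      ⋂ k : ℤ, ⋂ _ : 0 ≤ k, {q : N × N | dist (iterZ f k q.1) (iterZ f k q.2) ≤ ε} := by
    ext y; simp [WsLoc]
  rw [this]
  exact isClosed_iInter fun k => isClosed_iInter fun _ =>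
    isClosed_le (((iterZ_cont f k).comp continuous_fst).dist
      ((iterZ_cont f k).comp continuous_snd)) continuous_const

theorem wuPair_closed {N : Type*} [MetricSpace N] (f : N ≃ₜ N) (ε : ℝ) :
    IsClosed {q : N × N | q.2 ∈ WuLoc f ε q.1} := by
  have : {q : N × N | q.2 ∈ WuLoc f ε q.1} =
      ⋂ k : ℤ, ⋂ _ : k ≤ 0, {q : N × N | dist (iterZ f k q.1) (iterZ f k q.2) ≤ ε} := by
    ext y; simp [WuLoc]
  rw [this]
  exact isClosed_iInter fun k => isClosed_iInter fun _ =>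
    isClosed_le (((iterZ_cont f k).comp continuous_fst).dist
      ((iterZ_cont f k).comp continuous_snd)) continuous_const

theorem loc_inter {N : Type*} [MetricSpace N] (f : N ≃ₜ N) (α ε₁ ε₂ : ℝ)
    (hexp : IsExpansive f α) (h1 : ε₁ ≤ α) (h2 : ε₂ ≤ α) {a b : N}
    (hs : b ∈ WsLoc f ε₁ a) (hu : b ∈ WuLoc f ε₂ a) : a = b := by
  by_contra hne
  obtain ⟨k, hk⟩ := hexp a b hne
  rcases le_total 0 k with h | h
  · have := hs k h; linarith
  · have := hu k h; linarith

theorem wsLoc_two {N : Type*} [MetricSpace N] (f : N ≃ₜ N) (ε : ℝ) {p a b : N}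
    (ha : a ∈ WsLoc f ε p) (hb : b ∈ WsLoc f ε p) : b ∈ WsLoc f (2 * ε) a := fun k hk => by
  have h1 := ha k hk
  have h2 := hb k hk
  have := dist_triangle_left (iterZ f k a) (iterZ f k b) (iterZ f k p)
  linarith

theorem wuLoc_two {N : Type*} [MetricSpace N] (f : N ≃ₜ N) (ε : ℝ) {p a b : N}
    (ha : a ∈ WuLoc f ε p) (hb : b ∈ WuLoc f ε p) : b ∈ WuLoc f (2 * ε) a := fun k hk => by
  have h1 := ha k hk
  have h2 := hb k hk
  have := dist_triangle_left (iterZ f k a) (iterZ f k b) (iterZ f k p)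
  linarith

/-- Chart data at a hyperbolic periodic point. -/
theorem chart {N : Type*} [MetricSpace N] (f : N ≃ₜ N) (n r : ℕ) (d : N)
    (hd : d ∈ PerHr f n r) :
    ∃ (l : ℕ) (G : ModelSp n r → N) (η : ℝ), 1 ≤ l ∧ 0 < η ∧ iterZ f (l : ℤ) d = d ∧
      ContinuousOn G (Metric.ball 0 η) ∧ InjOn G (Metric.ball 0 η) ∧ G 0 = d ∧
      (∀ v ∈ Metric.ball (0 : ModelSp n r) η, iterZ f (l : ℤ) (G v) = G (modelL n r v)) ∧
      G '' Metric.ball 0 η ∈ nhds d := by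
  classical
  obtain ⟨l, hl, hper, U, V, h, hU, hV, h0V, hpU, hp0, hconj⟩ := hd
  let G : ModelSp n r → N := fun v => if hv : v ∈ V then (h.symm ⟨v, hv⟩ : N) else d
  have hG : ∀ v (hv : v ∈ V), G v = (h.symm ⟨v, hv⟩ : N) := fun v hv => dif_pos hv
  have hGU : ∀ v, v ∈ V → G v ∈ U := fun v hv => by rw [hG v hv]; exact Subtype.coe_prop _
  have hGh : ∀ z (hz : z ∈ U), G (h ⟨z, hz⟩ : V) = z := fun z hz => by
    rw [hG _ (Subtype.coe_prop _)]; simp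
  have hhG : ∀ v (hv : v ∈ V), ((h ⟨G v, hGU v hv⟩ : V) : ModelSp n r) = v := fun v hv => by
    have : (⟨G v, hGU v hv⟩ : U) = h.symm ⟨v, hv⟩ := Subtype.ext (hG v hv)
    rw [this]; simp
  have hGc : ContinuousOn G V := by
    rw [continuousOn_iff_continuous_domRestrict]
    have : V.domRestrict G = fun v => (h.symm v : N) := by
      funext v; exact hG v.1 v.2
    rw [this]
    exact continuous_subtype_val.comp h.symm.continuous
  have hG0 : G 0 = d := by
    have := hGh d hpU
    rwa [hp0] at this
  have hev : ∀ᶠ v in nhds (0 : ModelSp n r), v ∈ V ∧ iterZ f (l : ℤ) (G v) ∈ U := by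
    refine Filter.Eventually.and (hV.mem_nhds h0V) ?_
    have hca : ContinuousAt (fun v => iterZ f (l : ℤ) (G v)) 0 :=
      (iterZ_cont f l).continuousAt.comp (hGc.continuousAt (hV.mem_nhds h0V))
    apply hca
    show U ∈ nhds (iterZ f (l : ℤ) (G 0))
    rw [hG0, iterZ_nat, hper]
    exact hU.mem_nhds hpU
  obtain ⟨η, hη, hball⟩ := Metric.eventually_nhds_iff_ball.1 hev
  have hsub : Metric.ball (0 : ModelSp n r) η ⊆ V := fun v hv => (hball v hv).1
  refine ⟨l, G, η, hl, hη, by rw [iterZ_nat, hper], hGc.mono hsub, ?_, hG0, ?_, ?_⟩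
  · intro a ha b hb hab
    rw [← hhG a (hsub ha), ← hhG b (hsub hb)]
    congr 3
  · intro v hv
    have hz := hGU v (hsub hv)
    have hz' : (f.toEquiv ^ l) (G v) ∈ U := by
      have := (hball v hv).2; rwa [iterZ_nat] at this
    have hc := hconj (G v) hz hz'
    rw [hhG v (hsub hv)] at hc
    rw [← hc, hGh, iterZ_nat]
  · have hop : IsOpen ((fun z : U => ((h z : V) : ModelSp n r)) ⁻¹' Metric.ball 0 η) :=
      Metric.isOpen_ball.preimage (continuous_subtype_val.comp h.continuous)
    have hop2 := hU.isOpenMap_subtype_val _ hop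
    refine Filter.mem_of_superset (hop2.mem_nhds ⟨⟨d, hpU⟩, ?_, rfl⟩) ?_
    · show ((h ⟨d, hpU⟩ : V) : ModelSp n r) ∈ Metric.ball 0 η
      rw [hp0]; exact Metric.mem_ball_self hη
    · rintro _ ⟨⟨z, hz⟩, hzb, rfl⟩
      exact ⟨_, hzb, hGh z hz⟩

/-- A curve in the unstable set of a hyperbolic periodic point of index `r < n`. -/
theorem ray {N : Type*} [MetricSpace N] (f : N ≃ₜ N) (n r : ℕ) (hr : r < n) (d : N)
    (hd : d ∈ PerHr f n r) :
    ∃ (l : ℕ) (g : ℝ → N) (s : ℝ), 1 ≤ l ∧ 0 < s ∧ iterZ f (l : ℤ) d = d ∧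
      ContinuousOn g (Icc (-s) s) ∧ InjOn g (Icc (-s) s) ∧ g 0 = d ∧
      (∀ t ∈ Icc (-s) s, iterZ f (l : ℤ) (g (t / 2)) = g t) := by
  obtain ⟨l, G, η, hl, hη, hper, hc, hinj, h0, hconj, -⟩ := chart f n r d hd
  let L : ℝ → ModelSp n r := fun t => (0, fun _ => t)
  have hLc : Continuous L := by fun_prop
  have hL0 : L 0 = 0 := rfl
  have hLm : ∀ t, modelL n r (L (t / 2)) = L t := by
    intro t
    refine Prod.ext ?_ ?_
    · funext i; simp [modelL, L]
    · funext i; simp only [modelL, L]; ring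
  have hLb : ∀ t ∈ Icc (-(η / 2)) (η / 2), L t ∈ Metric.ball (0 : ModelSp n r) η := by
    intro t ht
    have h1 : |t| ≤ η / 2 := abs_le.2 ht
    rw [mem_ball_zero_iff, Prod.norm_def]
    refine max_lt ?_ ?_
    · simpa [L] using hη
    · refine (pi_norm_lt_iff hη).2 (fun i => ?_)
      simp only [L, Real.norm_eq_abs]; linarith
  refine ⟨l, fun t => G (L t), η / 2, hl, by linarith, hper, ?_, ?_, ?_, ?_⟩
  · exact hc.comp hLc.continuousOn hLb
  · intro a ha b hb hab
    have := hinj (hLb a ha) (hLb b hb) hab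
    exact congrFun (congrArg Prod.snd this) ⟨0, by omega⟩
  · simp only [hL0, h0]
  · intro t ht
    have := hconj (L (t / 2)) (hLb _ ⟨by linarith [ht.1], by linarith [ht.2]⟩)
    rw [hLm] at this
    exact this

/-- Unstable curve of a hyperbolic periodic point leaving a ball while avoiding `S`. -/
theorem escape {N : Type*} [MetricSpace N] (f : N ≃ₜ N) (α ε : ℝ) (hexp : IsExpansive f α)
    (hε : ε ≤ α) (n r : ℕ) (hr : r < n) (x : N) (ν : ℝ) (d : N)
    (hd : d ∈ PerHr f n r) (hU : UpSet f x ν d ⊆ WuLoc f ε d)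
    (w : N) (c : ℝ) (hdc : dist d w < c) (hcb : Metric.closedBall w c ⊆ Metric.ball x ν)
    (S : Set N) (hdS : d ∉ S)
    (hS : ∀ a ∈ S ∩ WuLoc f ε d, ∀ b ∈ S ∩ WuLoc f ε d, a = b) :
    ∃ P : Set N, IsPreconnected P ∧ d ∈ P ∧ P ⊆ Metric.ball x ν ∧ Disjoint P S ∧
      ∃ y ∈ P, dist y w = c ∧ y ∈ WuLoc f ε d := by
  obtain ⟨l, g, s, hl, hs, hper, hc, hinj, h0, hconj⟩ := ray f n r hr d hd
  have hl' : (0 : ℤ) < l := by exact_mod_cast hl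
  have hIcc : ∀ t ∈ Icc (-s) s, ∀ K : ℕ, t / 2 ^ K ∈ Icc (-s) s := by
    intro t ht K
    have h1 : |t| ≤ s := abs_le.2 ht
    refine abs_le.1 ?_
    rw [abs_div, abs_of_pos (by positivity : (0 : ℝ) < 2 ^ K)]
    exact (div_le_self (abs_nonneg t) (one_le_pow₀ (by norm_num))).trans h1
  have hpow : ∀ t ∈ Icc (-s) s, ∀ K : ℕ, iterZ f (l * (K : ℤ)) (g (t / 2 ^ K)) = g t := by
    intro t ht K
    induction K with
    | zero => simp [iterZ_zero]
    | succ K ih =>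
      have := hconj _ (hIcc t ht K)
      rw [Nat.cast_succ, mul_add, mul_one, iterZ_add, pow_succ, ← div_div, this, ih]
  have hback : ∀ t ∈ Icc (-s) s, ∀ K : ℕ, iterZ f (-(l * (K : ℤ))) (g t) = g (t / 2 ^ K) := by
    intro t ht K
    rw [← hpow t ht K, ← iterZ_add]
    simp [iterZ_zero]
  have h0I : (0 : ℝ) ∈ Icc (-s) s := ⟨by linarith, hs.le⟩
  have hWu0 : ∀ t ∈ Icc (-s) s, ∀ K : ℕ, iterZ f (l * (K : ℤ)) (g t) ∈ Wu f d := by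
    intro t ht K
    apply wu_of_mult f l hl d _ hper
    rw [← Filter.tendsto_add_atTop_iff_nat K]
    have hca : ContinuousAt g 0 := hc.continuousAt (Icc_mem_nhds (by linarith) hs)
    have hlim : Filter.Tendsto (fun k : ℕ => t / 2 ^ k) Filter.atTop (nhds 0) := by
      have := (tendsto_pow_atTop_nhds_zero_of_lt_one (r := (1 / 2 : ℝ)) (by norm_num)
        (by norm_num)).const_mul t
      rw [mul_zero] at this
      refine this.congr (fun k => ?_)
      rw [one_div, inv_pow]; rfl
    have h1 := hca.tendsto.comp hlim
    rw [h0] at h1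
    refine h1.congr (fun k => ?_)
    simp only [Function.comp]
    rw [← hback t ht k, ← iterZ_add]
    congr 1
    push_cast; ring
  -- the curve at stage `K`
  have hγc : ∀ K : ℕ, ContinuousOn (fun t => iterZ f (l * (K : ℤ)) (g t)) (Icc (-s) s) :=
    fun K => (iterZ_cont f _).comp_continuousOn hc
  have hγ0 : ∀ K : ℕ, iterZ f (l * (K : ℤ)) (g 0) = d := fun K => by
    rw [h0, iterZ_per f l d hper]
  -- connected pieces in the ball are in the local unstable set
  have hloc : ∀ K : ℕ, ∀ J ⊆ Icc (-s) s, IsPreconnected J → (0 : ℝ) ∈ J →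
      (∀ t ∈ J, iterZ f (l * (K : ℤ)) (g t) ∈ Metric.ball x ν) →
      ∀ t ∈ J, iterZ f (l * (K : ℤ)) (g t) ∈ WuLoc f ε d := by
    intro K J hJ hJc hJ0 hJb t ht
    apply hU
    have hpc : IsPreconnected ((fun t => iterZ f (l * (K : ℤ)) (g t)) '' J) :=
      hJc.image _ ((hγc K).mono hJ)
    refine hpc.subset_connectedComponentIn ⟨0, hJ0, hγ0 K⟩ ?_ ⟨t, ht, rfl⟩
    rintro _ ⟨u, hu, rfl⟩
    exact ⟨hWu0 u (hJ hu) K, hJb u hu⟩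
  have hexit : ∀ J ⊆ Icc (-s) s, IsPreconnected J → (0 : ℝ) ∈ J → (∃ t ∈ J, t ≠ 0) →
      ∃ K : ℕ, ∃ t ∈ J, c ≤ dist (iterZ f (l * (K : ℤ)) (g t)) w := by
    intro J hJ hJc hJ0 ⟨t, ht, ht0⟩
    by_contra hcon
    push Not at hcon
    have hW : ∀ K : ℕ, iterZ f (l * (K : ℤ)) (g t) ∈ WuLoc f ε d := fun K =>
      hloc K J hJ hJc hJ0 (fun u hu => hcb (hcon K u hu).le) t ht
    have hne : d ≠ g t := by
      intro h
      rw [← h0] at h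
      exact ht0 (hinj h0I (hJ ht) h).symm
    obtain ⟨k, hk⟩ := hexp d (g t) hne
    have h1 : k - l * (k.toNat : ℤ) ≤ 0 := by
      have := Int.self_le_toNat k
      nlinarith
    have h2 := hW k.toNat _ h1
    rw [← iterZ_add, sub_add_cancel] at h2
    have h3 : iterZ f (k - l * (k.toNat : ℤ)) d = iterZ f k d := by
      rw [sub_eq_add_neg, iterZ_add, ← mul_neg, iterZ_per f l d hper]
    rw [h3] at h2
    linarith
  have hmono : ∀ K K' : ℕ, K ≤ K' → ∀ t ∈ Icc (-s) s,
      iterZ f (l * (K' : ℤ)) (g (t / 2 ^ (K' - K))) = iterZ f (l * (K : ℤ)) (g t) := by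
    intro K K' hK t ht
    have : (l * (K' : ℤ)) = l * (K : ℤ) + l * ((K' - K : ℕ) : ℤ) := by
      rw [Nat.cast_sub hK]; ring
    rw [this, iterZ_add, hpow t ht]
  obtain ⟨K₁, t₁, ht₁, hK₁⟩ := hexit (Icc 0 s) (Icc_subset_Icc_left (by linarith))
    isPreconnected_Icc ⟨le_rfl, hs.le⟩ ⟨s, ⟨hs.le, le_rfl⟩, hs.ne'⟩
  obtain ⟨K₂, t₂, ht₂, hK₂⟩ := hexit (Icc (-s) 0) (Icc_subset_Icc_right (by linarith))
    isPreconnected_Icc ⟨by linarith, le_rfl⟩ ⟨-s, ⟨le_rfl, by linarith⟩, by linarith⟩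
  obtain ⟨K, hKa, hKb⟩ : ∃ K : ℕ, K₁ ≤ K ∧ K₂ ≤ K := ⟨max K₁ K₂, le_max_left _ _, le_max_right _ _⟩
  have ht₁' : t₁ ∈ Icc (-s) s := ⟨by linarith [ht₁.1], ht₁.2⟩
  have ht₂' : t₂ ∈ Icc (-s) s := ⟨ht₂.1, by linarith [ht₂.2]⟩
  rw [← hmono K₁ K hKa t₁ ht₁'] at hK₁
  rw [← hmono K₂ K hKb t₂ ht₂'] at hK₂
  have hu₁ := hIcc t₁ ht₁' (K - K₁)
  have hu₂ := hIcc t₂ ht₂' (K - K₂)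
  have hu₁0 : 0 ≤ t₁ / 2 ^ (K - K₁) := div_nonneg ht₁.1 (by positivity)
  have hu₂0 : t₂ / 2 ^ (K - K₂) ≤ 0 := div_nonpos_of_nonpos_of_nonneg ht₂.2 (by positivity)
  generalize t₁ / 2 ^ (K - K₁) = u₁ at *
  generalize t₂ / 2 ^ (K - K₂) = u₂ at *
  -- first exit times
  have hfirst : ∀ σ : ℝ, |σ| = 1 → ∀ u : ℝ, 0 ≤ u → u ≤ s →
      c ≤ dist (iterZ f (l * (K : ℤ)) (g (σ * u))) w →
      ∃ τ : ℝ, 0 ≤ τ ∧ τ ≤ s ∧ dist (iterZ f (l * (K : ℤ)) (g (σ * τ))) w = c ∧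
        ∀ t ∈ Icc 0 τ, dist (iterZ f (l * (K : ℤ)) (g (σ * t))) w ≤ c := by
    intro σ hσ u hu hus hcu
    have hσI : ∀ t ∈ Icc 0 u, σ * t ∈ Icc (-s) s := by
      intro t ht
      refine abs_le.1 ?_
      rw [abs_mul, hσ, one_mul, abs_of_nonneg ht.1]
      exact ht.2.trans hus
    have hcd : ContinuousOn (fun t => dist (iterZ f (l * (K : ℤ)) (g (σ * t))) w) (Icc 0 u) := by
      have : ContinuousOn (fun t => iterZ f (l * (K : ℤ)) (g (σ * t))) (Icc 0 u) :=
        (hγc K).comp (continuous_const.mul continuous_id).continuousOn hσI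
      exact (continuous_id.dist continuous_const).comp_continuousOn this
    let E : Set ℝ := Icc 0 u ∩ (fun t => dist (iterZ f (l * (K : ℤ)) (g (σ * t))) w) ⁻¹' (Ici c)
    have hE : IsCompact E :=
      isCompact_Icc.of_isClosed_subset (hcd.preimage_isClosed_of_isClosed isClosed_Icc isClosed_Ici)
        inter_subset_left
    obtain ⟨τ, hτ, hmin⟩ := hE.exists_isLeast ⟨u, ⟨hu, le_rfl⟩, hcu⟩
    have hlt : ∀ t ∈ Icc 0 τ, t ≠ τ → dist (iterZ f (l * (K : ℤ)) (g (σ * t))) w < c := by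
      intro t ht hne
      by_contra hcon
      push Not at hcon
      exact hne (le_antisymm ht.2 (hmin ⟨⟨ht.1, ht.2.trans hτ.1.2⟩, hcon⟩))
    have heq : dist (iterZ f (l * (K : ℤ)) (g (σ * τ))) w = c := by
      refine le_antisymm ?_ hτ.2
      have hiv := intermediate_value_Icc hτ.1.1 (hcd.mono (Icc_subset_Icc_right hτ.1.2))
      have hmem : c ∈ Icc (dist (iterZ f (l * (K : ℤ)) (g (σ * 0))) w)
          (dist (iterZ f (l * (K : ℤ)) (g (σ * τ))) w) := by
        refine ⟨?_, hτ.2⟩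
        rw [mul_zero, hγ0]; exact hdc.le
      obtain ⟨t, ht, hte⟩ := hiv hmem
      by_cases h : t = τ
      · rw [← h]; exact hte.le
      · exact absurd hte (hlt t ht h).ne
    refine ⟨τ, hτ.1.1, hτ.1.2.trans hus, heq, fun t ht => ?_⟩
    by_cases h : t = τ
    · rw [h, heq]
    · exact (hlt t ht h).le
  obtain ⟨τ₁, hτ₁0, hτ₁s, hτ₁e, hτ₁⟩ := hfirst 1 (by simp) u₁ hu₁0 hu₁.2 (by simpa using hK₁)
  obtain ⟨τ₂, hτ₂0, hτ₂s, hτ₂e, hτ₂⟩ := hfirst (-1) (by simp) (-u₂) (by linarith)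
    (by linarith [hu₂.1]) (by simpa using hK₂)
  simp only [one_mul] at hτ₁e hτ₁
  simp only [neg_mul, one_mul] at hτ₂e hτ₂
  have hJ₁ : Icc 0 τ₁ ⊆ Icc (-s) s := Icc_subset_Icc (by linarith) hτ₁s
  have hJ₂ : Icc (-τ₂) 0 ⊆ Icc (-s) s := Icc_subset_Icc (by linarith) hs.le
  have hb₁ : ∀ t ∈ Icc 0 τ₁, iterZ f (l * (K : ℤ)) (g t) ∈ Metric.ball x ν :=
    fun t ht => hcb (hτ₁ t ht)
  have hb₂ : ∀ t ∈ Icc (-τ₂) 0, iterZ f (l * (K : ℤ)) (g t) ∈ Metric.ball x ν := fun t ht => by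
    have := hτ₂ (-t) ⟨by linarith [ht.2], by linarith [ht.1]⟩
    rw [neg_neg] at this
    exact hcb this
  have hl₁ := hloc K _ hJ₁ isPreconnected_Icc ⟨le_rfl, hτ₁0⟩ hb₁
  have hl₂ := hloc K _ hJ₂ isPreconnected_Icc ⟨by linarith, le_rfl⟩ hb₂
  by_cases hdis : Disjoint ((fun t => iterZ f (l * (K : ℤ)) (g t)) '' Icc 0 τ₁) S
  · refine ⟨_, isPreconnected_Icc.image _ ((hγc K).mono hJ₁), ⟨0, ⟨le_rfl, hτ₁0⟩, hγ0 K⟩, ?_,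
      hdis, _, ⟨τ₁, ⟨hτ₁0, le_rfl⟩, rfl⟩, hτ₁e, hl₁ _ ⟨hτ₁0, le_rfl⟩⟩
    rintro _ ⟨t, ht, rfl⟩
    exact hb₁ t ht
  · refine ⟨(fun t => iterZ f (l * (K : ℤ)) (g t)) '' Icc (-τ₂) 0,
      isPreconnected_Icc.image _ ((hγc K).mono hJ₂), ⟨0, ⟨by linarith, le_rfl⟩, hγ0 K⟩, ?_,
      ?_, _, ⟨-τ₂, ⟨le_rfl, by linarith⟩, rfl⟩, hτ₂e, hl₂ _ ⟨le_rfl, by linarith⟩⟩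
    · rintro _ ⟨t, ht, rfl⟩
      exact hb₂ t ht
    · rw [Set.not_disjoint_iff] at hdis
      obtain ⟨_, ⟨a, ha, rfl⟩, haS⟩ := hdis
      rw [Set.disjoint_left]
      rintro _ ⟨b, hb, rfl⟩ hbS
      have hab := hS _ ⟨haS, hl₁ a ha⟩ _ ⟨hbS, hl₂ b hb⟩
      have hab' := hinj (hJ₁ ha) (hJ₂ hb) (iterZ_inj f _ hab)
      have : a = 0 := le_antisymm (by rw [hab']; exact hb.2) ha.1
      simp only [this, hγ0] at haS
      exact hdS haS

/-- The stable set of a periodic attractor is open. -/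
theorem ws_open {N : Type*} [MetricSpace N] (f : N ≃ₜ N) (n : ℕ) (d : N)
    (hd : d ∈ PerHr f n n) : IsOpen (Ws f d) := by
  obtain ⟨l, G, η, hl, hη, hper, hc, hinj, h0, hconj, hnb⟩ := chart f n n d hd
  have hmL : ∀ v : ModelSp n n, modelL n n v = (1 / 2 : ℝ) • v := by
    intro v
    refine Prod.ext ?_ ?_
    · funext i; simp [modelL]; ring
    · funext i; exact absurd i.2 (by omega)
  have hpow : ∀ v ∈ Metric.ball (0 : ModelSp n n) η, ∀ k : ℕ,
      iterZ f (l * (k : ℤ)) (G v) = G ((1 / 2 : ℝ) ^ k • v) ∧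
      (1 / 2 : ℝ) ^ k • v ∈ Metric.ball (0 : ModelSp n n) η := by
    intro v hv k
    induction k with
    | zero => simp only [pow_zero, one_smul]; exact ⟨by simp [iterZ_zero], hv⟩
    | succ k ih =>
      constructor
      · have := hconj _ ih.2
        rw [hmL, smul_smul, ← ih.1, ← iterZ_add] at this
        rw [pow_succ', ← this]
        congr 1
        push_cast; ring
      · have h1 := ih.2
        rw [mem_ball_zero_iff] at h1 ⊢
        rw [pow_succ', mul_smul, norm_smul]
        have : ‖(1 / 2 : ℝ)‖ = 1 / 2 := by norm_num
        rw [this]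
        linarith [norm_nonneg ((1 / 2 : ℝ) ^ k • v)]
  have hsub : G '' Metric.ball 0 η ⊆ Ws f d := by
    rintro _ ⟨v, hv, rfl⟩
    apply ws_of_mult f l hl d _ hper
    have hca : ContinuousAt G 0 := hc.continuousAt (Metric.ball_mem_nhds _ hη)
    have hlim : Filter.Tendsto (fun k : ℕ => (1 / 2 : ℝ) ^ k • v) Filter.atTop (nhds 0) := by
      have := (tendsto_pow_atTop_nhds_zero_of_lt_one (r := (1 / 2 : ℝ)) (by norm_num)
        (by norm_num)).smul_const v
      rwa [zero_smul] at this
    have h1 := hca.tendsto.comp hlim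
    rw [h0] at h1
    exact h1.congr (fun k => ((hpow v hv k).1).symm)
  rw [isOpen_iff_mem_nhds]
  intro y hy
  have hy' : Filter.Tendsto _ _ _ := hy
  obtain ⟨r, hr, hrb⟩ := Metric.mem_nhds_iff.1 hnb
  obtain ⟨k₀, hk₀⟩ := (Metric.tendsto_atTop.1 hy') r hr
  have hl' : (1 : ℤ) ≤ l := by exact_mod_cast hl
  have hkk : k₀ ≤ l * (k₀.toNat : ℤ) := by
    have := Int.self_le_toNat k₀
    nlinarith
  have h1 := hk₀ _ hkk
  rw [Real.dist_eq, sub_zero, abs_of_nonneg dist_nonneg, iterZ_per f l d hper, dist_comm] at h1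
  have h2 : iterZ f (l * (k₀.toNat : ℤ)) ⁻¹' Metric.ball d r ∈ nhds y :=
    (Metric.isOpen_ball.preimage (iterZ_cont f _)).mem_nhds h1
  refine Filter.mem_of_superset h2 (fun u hu => ?_)
  have hu' : Filter.Tendsto _ _ _ := hsub (hrb hu)
  show Filter.Tendsto _ _ _
  have := hu'.comp (Filter.tendsto_atTop_add_const_right Filter.atTop
    (-(l * (k₀.toNat : ℤ))) Filter.tendsto_id)
  refine this.congr (fun k => ?_)
  simp only [Function.comp, id, ← iterZ_add, neg_add_cancel_right]
  rw [iterZ_add f k, ← mul_neg, iterZ_per f l d hper]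

end Stmt15Aux

open Stmt15Aux

/-- **Lemma (uniform convergence of umbrellas to the frontier).** -/
theorem stmt15
    {M : Type*} [MetricSpace M] [CompactSpace M] [ConnectedSpace M]
    (n : ℕ) [ChartedSpace (EuclideanSpace ℝ (Fin n)) M]
    (f : M ≃ₜ M) (α : ℝ) (hα : 0 < α) (hexp : IsExpansive f α)
    (x : M) (hx : ¬ AdmitsLPS f n x)
    (ε : ℝ) (hε : 0 < ε) (hεα : 2 * ε < α) (ν : ℝ) (hν : 0 < ν)
    (hi : ∀ p ∈ PerH f n ∩ Metric.ball x ν,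
      SpSet f x ν p ⊆ WsLoc f ε p ∧ UpSet f x ν p ⊆ WuLoc f ε p)
    (hii : ∀ p ∈ PerHr f n (n - 1) ∩ Metric.ball x ν,
      ∃ V₁ V₂ : Set M, TwoComponents (Metric.ball x ν \ SpSet f x ν p) V₁ V₂)
    (hdense : closure (PerH f n) = Set.univ)
    (δ : ℝ) (hδ : δ ∈ Set.Ioo (0 : ℝ) ν)
    (hfin : {C : Set M | IsMaxChainIn f n x ν δ C}.Finite)
    (hdisj : ∀ C₁ C₂ : Set M, IsMaxChainIn f n x ν δ C₁ → IsMaxChainIn f n x ν δ C₂ →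
      C₁ ≠ C₂ → Disjoint C₁ C₂)
    (hacc : ∀ C : Set M, IsMaxChainIn f n x ν δ C → x ∈ closure C)
    :
    ∀ p ∈ Xdelta f n x δ, ∀ C : Set M, IsMaxChainIn f n x ν δ C → p ∈ C →
      ∀ z ∈ frontier (closure (⋃ q ∈ C, ShatSet f x ν q)) ∩ Metric.ball x δ,
        ∀ ρ : ℝ, 0 < ρ →
          ∃ V : Set M, IsOpen V ∧ z ∈ V ∧
            ∀ q ∈ C ∩ V,
              closure (⋃ q' ∈ C, ShatSet f x ν q') ∩ closure (Metric.ball x δ) ⊆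
                ShatSet f x ν q ∪
                  {w : M | ∃ a ∈ frontier (closure (⋃ q' ∈ C, ShatSet f x ν q')),
                    dist w a < ρ} := by
  classical
  haveI : LocallyConnectedSpace M :=
    ChartedSpace.locallyConnectedSpace (EuclideanSpace ℝ (Fin n)) M
  intro p hp C hC hpC z hz ρ hρ
  have hCX : ∀ q ∈ C, q ∈ PerHr f n (n - 1) ∧ q ∈ Metric.ball x δ := fun q hq => hC.1.1 hq
  have hδν : Metric.ball x δ ⊆ Metric.ball x ν := Metric.ball_subset_ball hδ.2.le
  have hPH : ∀ q ∈ C, q ∈ PerH f n ∩ Metric.ball x ν := by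
    intro q hq
    refine ⟨?_, hδν (hCX q hq).2⟩
    simp only [PerH, Set.mem_iUnion]
    exact ⟨n - 1, Finset.mem_range.2 (by omega), (hCX q hq).1⟩
  have hxν : x ∈ Metric.ball x ν := Metric.mem_ball_self hν
  have hxC : x ∈ closure C := hacc C hC
  -- basic facts on the stable plaques
  have hSself : ∀ q ∈ Metric.ball x ν, q ∈ SpSet f x ν q := fun q hq =>
    mem_connectedComponentIn ⟨ws_self f q, hq⟩
  have hSB : ∀ q, SpSet f x ν q ⊆ Metric.ball x ν := fun q =>
    (connectedComponentIn_subset _ _).trans inter_subset_right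
  have hSW : ∀ q, SpSet f x ν q ⊆ Ws f q := fun q =>
    (connectedComponentIn_subset _ _).trans inter_subset_left
  have hSeq : ∀ q q' : M, ∀ y, y ∈ SpSet f x ν q → y ∈ SpSet f x ν q' →
      SpSet f x ν q = SpSet f x ν q' := by
    intro q q' y h h'
    have hW : Ws f q = Ws f q' := by
      rw [← ws_symm f (hSW q h), ← ws_symm f (hSW q' h')]
    unfold SpSet at h h' ⊢
    rw [connectedComponentIn_eq h, connectedComponentIn_eq h', hW]
  have hScl : ∀ q ∈ PerH f n ∩ Metric.ball x ν,
      closure (SpSet f x ν q) ∩ Metric.ball x ν ⊆ SpSet f x ν q := by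
    intro q hq
    have hpc : IsPreconnected (closure (SpSet f x ν q) ∩ Metric.ball x ν) :=
      IsPreconnected.subset_closure isPreconnected_connectedComponentIn
        (fun y hy => ⟨subset_closure hy, hSB q hy⟩) inter_subset_left
    refine hpc.subset_connectedComponentIn ⟨subset_closure (hSself q hq.2), hq.2⟩ ?_
    rintro y ⟨hy, hyB⟩
    refine ⟨wsLoc_sub f α ε hexp (by linarith) q ?_, hyB⟩
    exact closure_minimal (hi q hq).1 (wsLoc_closed f ε q) hy
  have hDopen : ∀ q ∈ PerH f n ∩ Metric.ball x ν,
      IsOpen (Metric.ball x ν \ SpSet f x ν q) := by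
    intro q hq
    have : Metric.ball x ν \ SpSet f x ν q = Metric.ball x ν \ closure (SpSet f x ν q) := by
      ext y
      exact ⟨fun h => ⟨h.1, fun h' => h.2 (hScl q hq ⟨h', h.1⟩)⟩,
        fun h => ⟨h.1, fun h' => h.2 (subset_closure h')⟩⟩
    rw [this]
    exact Metric.isOpen_ball.sdiff isClosed_closure
  obtain ⟨Out, hOut⟩ : ∃ Out : M → Set M, ∀ q, Out q =
      connectedComponentIn (Metric.ball x ν \ SpSet f x ν q) x := ⟨_, fun _ => rfl⟩
  have hShat : ∀ q, ShatSet f x ν q = Metric.ball x ν \ Out q := fun q => by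
    rw [hOut]; rfl
  have hOutD : ∀ q, Out q ⊆ Metric.ball x ν \ SpSet f x ν q := fun q => by
    rw [hOut]; exact connectedComponentIn_subset _ _
  have hOutopen : ∀ q ∈ C, IsOpen (Out q) := fun q hq => by
    rw [hOut]; exact (hDopen q (hPH q hq)).connectedComponentIn
  have hOutconn : ∀ q, IsPreconnected (Out q) := fun q => by
    rw [hOut]; exact isPreconnected_connectedComponentIn
  -- a connected subset of `B \ S_q` meeting `Out q` lies in `Out q`
  have hOutabs : ∀ q, ∀ P : Set M, IsPreconnected P → P ⊆ Metric.ball x ν →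
      Disjoint P (SpSet f x ν q) → ∀ y ∈ P, y ∈ Out q → P ⊆ Out q := by
    intro q P hP hPB hdis y hyP hy
    rw [hOut] at hy ⊢
    rw [connectedComponentIn_eq hy]
    exact hP.subset_connectedComponentIn hyP
      (fun u hu => ⟨hPB hu, Set.disjoint_left.1 hdis hu⟩)
  have hSsub : ∀ q, SpSet f x ν q ⊆ ShatSet f x ν q := fun q y hy => by
    rw [hShat]; exact ⟨hSB q hy, fun h => (hOutD q h).2 hy⟩
  set T : Set M := ⋃ q ∈ C, ShatSet f x ν q with hT
  have hShatT : ∀ q ∈ C, ShatSet f x ν q ⊆ T := fun q hq => by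
    rw [hT]; exact Set.subset_biUnion_of_mem (u := fun q => ShatSet f x ν q) hq
  obtain ⟨hzfr, hzδ⟩ := hz
  have hzint : z ∉ interior (closure T) := hzfr.2
  -- `x` lies on no `S_q`
  have hxS : ∀ q ∈ C, x ∉ SpSet f x ν q := by
    intro q hq hxq
    apply hzint
    have hB : Metric.ball x ν ⊆ T := by
      refine Set.Subset.trans ?_ (hShatT q hq)
      intro y hy
      rw [hShat, hOut, connectedComponentIn_eq_empty (fun h => h.2 hxq)]
      exact ⟨hy, fun h => h⟩
    exact interior_maximal (hB.trans subset_closure) Metric.isOpen_ball (hδν hzδ)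
  have hxOut : ∀ q ∈ C, x ∈ Out q := fun q hq => by
    rw [hOut]; exact mem_connectedComponentIn ⟨hxν, hxS q hq⟩
  -- open interiors
  obtain ⟨I, hI⟩ : ∃ I : M → Set M, ∀ q, I q =
      (Metric.ball x ν \ SpSet f x ν q) \ Out q := ⟨_, fun _ => rfl⟩
  have hIopen : ∀ q ∈ C, IsOpen (I q) := by
    intro q hq
    rw [isOpen_iff_mem_nhds]
    intro y hy
    rw [hI] at hy
    have hyo := (hDopen q (hPH q hq)).connectedComponentIn (x := y)
    refine Filter.mem_of_superset (hyo.mem_nhds (mem_connectedComponentIn hy.1)) ?_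
    intro u hu
    rw [hI]
    refine ⟨connectedComponentIn_subset _ _ hu, fun huo => hy.2 ?_⟩
    rw [hOut] at huo ⊢
    rw [connectedComponentIn_eq huo, ← connectedComponentIn_eq hu]
    exact mem_connectedComponentIn hy.1
  have hIS : ∀ q, I q ⊆ ShatSet f x ν q := fun q y hy => by
    rw [hI] at hy; rw [hShat]; exact ⟨hy.1.1, hy.2⟩
  have htot : ∀ q₀ ∈ C, ∀ q₁ ∈ C, q₁ ∈ Out q₀ → ShatSet f x ν q₀ ⊆ ShatSet f x ν q₁ := by
    intro q₀ hq₀ q₁ hq₁ ho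
    rcases hC.1.2 q₀ hq₀ q₁ hq₁ with h | h
    · exact h
    · have h1 := h (hSsub q₁ (hSself q₁ (hPH q₁ hq₁).2))
      rw [hShat] at h1
      exact absurd ho h1.2
  -- no maximum
  have hnext : ∀ q₀ ∈ C, ∃ q₁ ∈ C, ShatSet f x ν q₀ ⊆ I q₁ := by
    intro q₀ hq₀
    obtain ⟨q₁, hq₁o, hq₁⟩ := mem_closure_iff.1 hxC (Out q₀) (hOutopen q₀ hq₀) (hxOut q₀ hq₀)
    refine ⟨q₁, hq₁, ?_⟩
    have hq₁S := hSself q₁ (hPH q₁ hq₁).2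
    have hdis : Disjoint (SpSet f x ν q₁) (SpSet f x ν q₀) := by
      rw [Set.disjoint_left]
      intro y hy hy'
      have he := hSeq q₁ q₀ y hy hy'
      exact (hOutD q₀ hq₁o).2 (he ▸ hq₁S)
    have hsub : SpSet f x ν q₁ ⊆ Out q₀ :=
      hOutabs q₀ _ isPreconnected_connectedComponentIn (hSB q₁) hdis q₁ hq₁S hq₁o
    intro y hy
    have h1 := htot q₀ hq₀ q₁ hq₁ hq₁o hy
    rw [hShat] at hy h1
    rw [hI]
    exact ⟨⟨hy.1, fun h => hy.2 (hsub h)⟩, h1.2⟩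
  have hTcov : ∀ K : Set M, IsCompact K → K ⊆ T → ∃ q ∈ C, K ⊆ I q := by
    intro K hK hKT
    haveI : Nonempty C := ⟨⟨p, hpC⟩⟩
    obtain ⟨q, hq⟩ := hK.elim_directed_cover (fun q : C => I q) (fun q => hIopen q q.2)
      (by
        intro y hy
        have := hKT hy
        rw [hT] at this
        simp only [Set.mem_iUnion] at this
        obtain ⟨q, hq, hyq⟩ := this
        obtain ⟨q₁, hq₁, h1⟩ := hnext q hq
        exact Set.mem_iUnion.2 ⟨⟨q₁, hq₁⟩, h1 hyq⟩)
      (by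
        rintro ⟨a, ha⟩ ⟨b, hb⟩
        rcases hC.1.2 a ha b hb with h | h
        · obtain ⟨c, hc, h1⟩ := hnext b hb
          exact ⟨⟨c, hc⟩, (hIS a).trans (h.trans h1), (hIS b).trans h1⟩
        · obtain ⟨c, hc, h1⟩ := hnext a ha
          exact ⟨⟨c, hc⟩, (hIS a).trans h1, (hIS b).trans (h.trans h1)⟩)
    exact ⟨q, q.2, hq⟩
  have hIint : ∀ q ∈ C, I q ⊆ interior (closure T) := fun q hq =>
    interior_maximal (((hIS q).trans (hShatT q hq)).trans subset_closure) (hIopen q hq)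
  have hnotT : ∀ y ∈ Metric.ball x ν, y ∉ T → ∀ q ∈ C, y ∈ Out q := by
    intro y hyB hyT q hq
    by_contra h
    exact hyT (hShatT q hq (by rw [hShat]; exact ⟨hyB, h⟩))
  -- points of `closure T \ T` are limits of plaques
  have hlimS : ∀ y ∈ Metric.ball x ν, y ∈ closure T → y ∉ T → ∀ η > 0,
      ∃ q₀ ∈ C, ∀ q ∈ C, ShatSet f x ν q₀ ⊆ ShatSet f x ν q →
        ∃ a ∈ SpSet f x ν q, dist a y < η := by
    intro y hyB hycl hyT η hη
    have hnb : Metric.ball x ν ∩ Metric.ball y η ∈ nhds y :=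
      (Metric.isOpen_ball.inter Metric.isOpen_ball).mem_nhds ⟨hyB, Metric.mem_ball_self hη⟩
    obtain ⟨W, hWsub, hWo, hyW, hWc⟩ :=
      locallyConnectedSpace_iff_subsets_isOpen_isConnected.1 this y _ hnb
    obtain ⟨u, huW, huT⟩ := mem_closure_iff.1 hycl W hWo hyW
    rw [hT] at huT
    simp only [Set.mem_iUnion] at huT
    obtain ⟨q₀, hq₀, huq⟩ := huT
    refine ⟨q₀, hq₀, fun q hq hle => ?_⟩
    by_contra hcon
    push Not at hcon
    have hdis : Disjoint W (SpSet f x ν q) := by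
      rw [Set.disjoint_left]
      intro v hv hvS
      exact absurd (hWsub hv).2 (not_lt.2 (hcon v hvS))
    have h1 := hOutabs q W hWc.isPreconnected (fun v hv => (hWsub hv).1) hdis y hyW
      (hnotT y hyB hyT q hq)
    have h2 := hle huq
    rw [hShat] at h2
    exact h2.2 (h1 huW)
  have hpairS : ∀ y ∈ Metric.ball x ν, y ∈ closure T → y ∉ T →
      ∀ w ∈ Metric.ball x ν, w ∈ closure T → w ∉ T → y ∈ WsLoc f (2 * ε) w := by
    intro y hy1 hy2 hy3 w hw1 hw2 hw3
    have : (w, y) ∈ closure {q : M × M | q.2 ∈ WsLoc f (2 * ε) q.1} := by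
      rw [Metric.mem_closure_iff]
      intro η hη
      obtain ⟨q₀, hq₀, h0⟩ := hlimS y hy1 hy2 hy3 η hη
      obtain ⟨q₁, hq₁, h1⟩ := hlimS w hw1 hw2 hw3 η hη
      obtain ⟨q, hq, ha, hb⟩ : ∃ q ∈ C, ShatSet f x ν q₀ ⊆ ShatSet f x ν q ∧
          ShatSet f x ν q₁ ⊆ ShatSet f x ν q := by
        rcases hC.1.2 q₀ hq₀ q₁ hq₁ with h | h
        · exact ⟨q₁, hq₁, h, Subset.rfl⟩
        · exact ⟨q₀, hq₀, Subset.rfl, h⟩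
      obtain ⟨a, haS, hay⟩ := h0 q hq ha
      obtain ⟨b, hbS, hbw⟩ := h1 q hq hb
      have hsub := (hi q (hPH q hq)).1
      refine ⟨(b, a), wsLoc_two f ε (hsub hbS) (hsub haS), ?_⟩
      rw [Prod.dist_eq]
      refine max_lt ?_ ?_
      · rw [dist_comm]; exact hbw
      · rw [dist_comm]; exact hay
    rw [(wsPair_closed f (2 * ε)).closure_eq] at this
    exact this
  -- the heart of the proof: interior points of the closure lie in `T`
  have hkey : ∀ w ∈ Metric.ball x ν, w ∈ interior (closure T) → w ∈ T := by
    intro w hwB hwI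
    by_contra hwT
    obtain ⟨c, hc, hcsub⟩ := Metric.nhds_basis_closedBall.mem_iff.1
      (Filter.inter_mem (isOpen_interior.mem_nhds hwI) (Metric.isOpen_ball.mem_nhds hwB))
    have hwcl : w ∈ closure T := interior_subset hwI
    -- compact set of unstable points on the sphere
    let Pc : Set (M × M) := {q : M × M | q.2 ∈ WuLoc f ε q.1} ∩ {q | dist q.2 w = c}
    have hPc : IsClosed Pc := (wuPair_closed f ε).inter
      (isClosed_eq (continuous_snd.dist continuous_const) continuous_const)
    let K : Set M := (fun y => (w, y)) ⁻¹' Pc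
    have hKc : IsCompact K := (hPc.preimage (by fun_prop)).isCompact
    have hKT : K ⊆ T := by
      intro y hy
      by_contra hyT
      have hyc : dist y w = c := hy.2
      have hym := hcsub (show y ∈ Metric.closedBall w c from hyc.le)
      have hs := hpairS y hym.2 (interior_subset hym.1) hyT w hwB hwcl hwT
      have := loc_inter f α (2 * ε) ε hexp hεα.le (by linarith) hs hy.1
      rw [this, dist_self] at hyc
      linarith
    obtain ⟨q, hq, hKq⟩ := hTcov K hKc hKT
    have hwq : w ∈ Out q := hnotT w hwB hwT q hq
    let Q : Set (M × M) := Pc ∩ {u | u.2 ∉ I q}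
    have hQ : IsClosed Q := hPc.inter ((hIopen q hq).isClosed_compl.preimage continuous_snd)
    have hQ1 : IsClosed (Prod.fst '' Q) := (hQ.isCompact.image continuous_fst).isClosed
    have hmem : w ∈ closure (Prod.fst '' Q) := by
      rw [_root_.mem_closure_iff]
      intro W hW hwW
      have hop : IsOpen (W ∩ Out q ∩ Metric.ball w c) :=
        (hW.inter (hOutopen q hq)).inter Metric.isOpen_ball
      have hwd : w ∈ closure (PerH f n) := by rw [hdense]; trivial
      obtain ⟨d, ⟨⟨hdW, hdO⟩, hdc⟩, hdP⟩ :=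
        mem_closure_iff.1 hwd _ hop ⟨⟨hwW, hwq⟩, Metric.mem_ball_self hc⟩
      have hdB : d ∈ Metric.ball x ν := (hOutD q hdO).1
      have hdi := hi d ⟨hdP, hdB⟩
      have hdr := hdP
      simp only [PerH, Set.mem_iUnion] at hdr
      obtain ⟨r, hrn, hdr⟩ := hdr
      have hrn' := Finset.mem_range.1 hrn
      rcases Nat.lt_or_ge r n with hlt | hge
      · obtain ⟨P, hPc', hdP', hPB, hPS, y, hyP, hyc, hyu⟩ :=
          escape f α ε hexp (by linarith) n r hlt x ν d hdr hdi.2 w c hdc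
            (fun u hu => (hcsub hu).2) (SpSet f x ν q) (hOutD q hdO).2
            (by
              intro a ha b hb
              have hsub := (hi q (hPH q hq)).1
              exact loc_inter f α (2 * ε) (2 * ε) hexp hεα.le hεα.le
                (wsLoc_two f ε (hsub ha.1) (hsub hb.1)) (wuLoc_two f ε ha.2 hb.2))
        have hyO := hOutabs q P hPc' hPB hPS d hdP' hdO hyP
        refine ⟨d, hdW, (d, y), ⟨⟨hyu, hyc⟩, fun hyI => ?_⟩, rfl⟩
        rw [hI] at hyI
        exact hyI.2 hyO
      · exfalso
        have hrn2 : r = n := by omega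
        rw [hrn2] at hdr
        have hSo : IsOpen (SpSet f x ν d) :=
          ((ws_open f n d hdr).inter Metric.isOpen_ball).connectedComponentIn
        have hDo := hDopen d ⟨hdP, hdB⟩
        have hxSd : x ∈ SpSet f x ν d := by
          have hsub : Out q ⊆ SpSet f x ν d := by
            refine (hOutconn q).subset_left_of_subset_union hSo hDo
              disjoint_sdiff_right ?_ ⟨d, hdO, hSself d hdB⟩
            intro u hu
            by_cases h : u ∈ SpSet f x ν d
            · exact Or.inl h
            · exact Or.inr ⟨(hOutD q hu).1, h⟩
          exact hsub (hxOut q hq)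
        obtain ⟨q', hq'S, hq'⟩ := mem_closure_iff.1 hxC _ hSo hxSd
        have he := hSeq q' d q' (hSself q' (hPH q' hq').2) hq'S
        exact hxS q' hq' (he ▸ hxSd)
    rw [hQ1.closure_eq] at hmem
    obtain ⟨⟨w', y⟩, hu, rfl⟩ := hmem
    exact hu.2 (hKq hu.1)
  -- conclusion
  let K : Set M := closure T ∩ closure (Metric.ball x δ) ∩
    {w : M | ∃ a ∈ frontier (closure T), dist w a < ρ}ᶜ
  have hKc : IsCompact K := by
    refine IsClosed.isCompact ((isClosed_closure.inter isClosed_closure).inter ?_)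
    rw [isClosed_compl_iff]
    have : {w : M | ∃ a ∈ frontier (closure T), dist w a < ρ} =
        ⋃ a ∈ frontier (closure T), Metric.ball a ρ := by
      ext w; simp
    rw [this]
    exact isOpen_biUnion fun a _ => Metric.isOpen_ball
  have hKT : K ⊆ T := by
    rintro w ⟨⟨hw1, hw2⟩, hw3⟩
    apply hkey w
    · exact Metric.closedBall_subset_ball hδ.2 (Metric.closure_ball_subset_closedBall hw2)
    · by_contra hcon
      exact hw3 ⟨w, ⟨subset_closure hw1, hcon⟩, by rw [dist_self]; exact hρ⟩
  obtain ⟨q₀, hq₀, hKq⟩ := hTcov K hKc hKT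
  refine ⟨Out q₀, hOutopen q₀ hq₀, ?_, ?_⟩
  · by_contra hcon
    obtain ⟨q₁, hq₁, h1⟩ := hnext q₀ hq₀
    exact hzint (hIint q₁ hq₁ (h1 (by rw [hShat]; exact ⟨hδν hzδ, hcon⟩)))
  · rintro q ⟨hq, hqo⟩ w hw
    by_cases h : w ∈ {w : M | ∃ a ∈ frontier (closure T), dist w a < ρ}
    · exact Or.inr h
    · exact Or.inl (htot q₀ hq₀ q hq hqo (hIS q₀ (hKq ⟨hw, h⟩)))
end

section
/- In the setting below, assume additionally that the closure of Per_H equals M and that δ ∈ (0, ν) is such that X_δ has finitely many maximal chains that are pairwise disjoint, each accumulating at x. Let p ∈ X_δ, write [p] for the maximal chain of X_δ containing p and S_{[p]} = closure(⋃_{q∈[p]} Ŝ_q). Then for every z ∈ ∂S_{[p]} ∩ B_δ(x) and every ε' > 0 there exists an open neighborhood V of z such that for all q, r ∈ V ∩ [p]: U_q ∩ S_r ∩ B_{ε'}(z) ∩ S_{[p]} ≠ ∅ and U_q ∩ ∂S_{[p]} ∩ B_{ε'}(z) ≠ ∅, where ∂ denotes the topological frontier in M. -/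
open Metric Set

variable {M : Type*} [MetricSpace M]

variable {M : Type*} [MetricSpace M]

section Helpers

variable {X : Type*} [MetricSpace X]

lemma iterZ_zero (f : X ≃ₜ X) (x : X) : iterZ f 0 x = x := by simp [iterZ]

lemma iterZ_add (f : X ≃ₜ X) (a b : ℤ) (x : X) :
    iterZ f (a + b) x = iterZ f a (iterZ f b x) := by
  simp [iterZ, zpow_add]

lemma iterZ_nat (f : X ≃ₜ X) (l : ℕ) (x : X) : iterZ f (l : ℤ) x = (f.toEquiv ^ l) x := by
  simp [iterZ]

lemma iterZ_one (f : X ≃ₜ X) (x : X) : iterZ f 1 x = f x := by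
  simp [iterZ]

lemma iterZ_neg_one (f : X ≃ₜ X) (x : X) : iterZ f (-1) x = f.symm x := by
  simp only [iterZ, zpow_neg, zpow_one]
  rfl

lemma iterZ_cont (f : X ≃ₜ X) (k : ℤ) : Continuous (iterZ f k) := by
  induction k using Int.induction_on with
  | zero =>
    have : iterZ f 0 = id := funext (iterZ_zero f)
    rw [this]; exact continuous_id
  | succ i ih =>
    have : iterZ f ((i : ℤ) + 1) = iterZ f i ∘ f := by
      funext x; rw [iterZ_add, iterZ_one]; rfl
    rw [this]; exact ih.comp f.continuous
  | pred i ih =>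
    have : iterZ f (-(i : ℤ) - 1) = iterZ f (-i) ∘ f.symm := by
      funext x; rw [sub_eq_add_neg, iterZ_add, iterZ_neg_one]; rfl
    rw [this]; exact ih.comp f.symm.continuous

lemma iterZ_neg_cancel (f : X ≃ₜ X) (k : ℤ) (x : X) : iterZ f (-k) (iterZ f k x) = x := by
  rw [← iterZ_add]; simp [iterZ_zero]

lemma iterZ_cancel_neg (f : X ≃ₜ X) (k : ℤ) (x : X) : iterZ f k (iterZ f (-k) x) = x := by
  rw [← iterZ_add]; simp [iterZ_zero]

lemma iterZ_symm (f : X ≃ₜ X) (k : ℤ) (x : X) : iterZ f.symm k x = iterZ f (-k) x := by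
  have : f.symm.toEquiv = (f.toEquiv)⁻¹ := rfl
  simp [iterZ, this]

lemma iterZ_per (f : X ≃ₜ X) (l : ℤ) (q : X) (h : iterZ f l q = q) (k : ℕ) :
    iterZ f (l * k) q = q := by
  induction k with
  | zero => simp [iterZ_zero]
  | succ i ih =>
    have : l * ((i + 1 : ℕ) : ℤ) = l * i + l := by push_cast; ring
    rw [this, iterZ_add, h, ih]

lemma iterZ_per_neg (f : X ≃ₜ X) (l : ℤ) (q : X) (h : iterZ f l q = q) (k : ℕ) :
    iterZ f (-(l * k)) q = q := by
  conv_lhs => rw [← iterZ_per f l q h k]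
  exact iterZ_neg_cancel _ _ _

lemma unif_exp [CompactSpace X] (f : X ≃ₜ X) (α : ℝ) (hexp : IsExpansive f α) (η : ℝ) (hη : 0 < η) :
    ∃ N : ℕ, ∀ u v : X, (∀ k : ℤ, |k| ≤ N → dist (iterZ f k u) (iterZ f k v) ≤ α) →
      dist u v < η := by
  by_contra! hcon
  choose u v huv hd using hcon
  obtain ⟨⟨a, b⟩, -, φ, hφ, hlim⟩ :=
    isCompact_univ.tendsto_subseq (x := fun n => (u n, v n)) (fun n => mem_univ _)
  have ha : Filter.Tendsto (fun n => u (φ n)) Filter.atTop (nhds a) :=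
    (continuous_fst.tendsto _).comp hlim
  have hb : Filter.Tendsto (fun n => v (φ n)) Filter.atTop (nhds b) :=
    (continuous_snd.tendsto _).comp hlim
  have hab : η ≤ dist a b := ge_of_tendsto' (ha.dist hb) (fun n => hd _)
  have hne : a ≠ b := by
    rintro rfl; simp at hab; linarith
  obtain ⟨k, hk⟩ := hexp a b hne
  have h1 : Filter.Tendsto (fun n => dist (iterZ f k (u (φ n))) (iterZ f k (v (φ n))))
      Filter.atTop (nhds (dist (iterZ f k a) (iterZ f k b))) :=
    (((iterZ_cont f k).tendsto _).comp ha).dist (((iterZ_cont f k).tendsto _).comp hb)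
  have h2 : dist (iterZ f k a) (iterZ f k b) ≤ α := by
    refine le_of_tendsto h1 ?_
    filter_upwards [Filter.eventually_ge_atTop k.natAbs] with n hn
    apply huv
    have := hφ.le_apply (x := n)
    rw [Int.abs_eq_natAbs]
    exact_mod_cast hn.trans this
  linarith

lemma WsLoc_unif [CompactSpace X] (f : X ≃ₜ X) (α : ℝ) (hexp : IsExpansive f α) (η : ℝ)
    (hη : 0 < η) :
    ∃ N : ℕ, ∀ q y : X, y ∈ WsLoc f α q → ∀ k : ℤ, (N : ℤ) ≤ k →
      dist (iterZ f k q) (iterZ f k y) < η := by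
  obtain ⟨N, hN⟩ := unif_exp f α hexp η hη
  refine ⟨N, fun q y hy k hk => hN _ _ fun j hj => ?_⟩
  rw [← iterZ_add, ← iterZ_add]
  apply hy
  have := (abs_le.1 hj).1
  omega

lemma WsLoc_mono (f : X ≃ₜ X) {a b : ℝ} (hab : a ≤ b) (q : X) : WsLoc f a q ⊆ WsLoc f b q :=
  fun _ hy k hk => (hy k hk).trans hab

lemma WsLoc_sub_Ws [CompactSpace X] (f : X ≃ₜ X) (α : ℝ) (hexp : IsExpansive f α) (q : X) :
    WsLoc f α q ⊆ Ws f q := by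
  intro y hy
  refine Metric.tendsto_atTop.2 fun η hη => ?_
  obtain ⟨N, hN⟩ := WsLoc_unif f α hexp η hη
  refine ⟨N, fun k hk => ?_⟩
  simpa [Real.dist_eq, abs_of_nonneg dist_nonneg] using hN q y hy k hk

lemma Ws_self (f : X ≃ₜ X) (q : X) : q ∈ Ws f q := by simp [Ws]

lemma Wu_self (f : X ≃ₜ X) (q : X) : q ∈ Wu f q := by simp [Wu]

lemma Ws_symm (f : X ≃ₜ X) {q y : X} (h : y ∈ Ws f q) : q ∈ Ws f y := by
  simpa [Ws, dist_comm] using h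

lemma Ws_trans (f : X ≃ₜ X) {q y w : X} (h : y ∈ Ws f q) (h' : w ∈ Ws f y) : w ∈ Ws f q := by
  have := Filter.Tendsto.add h h'
  simp only [add_zero] at this
  exact squeeze_zero (fun _ => dist_nonneg) (fun k => dist_triangle _ _ _) this

lemma Ws_eq (f : X ≃ₜ X) {q y : X} (h : y ∈ Ws f q) : Ws f y = Ws f q := by
  ext w
  exact ⟨fun h' => Ws_trans f h h', fun h' => Ws_trans f (Ws_symm f h) h'⟩

lemma WsLoc_limit (f : X ≃ₜ X) (c : ℝ) {q s : ℕ → X} {z w : X}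
    (hq : Filter.Tendsto q Filter.atTop (nhds z)) (hs : Filter.Tendsto s Filter.atTop (nhds w))
    (h : ∀ᶠ n in Filter.atTop, s n ∈ WsLoc f c (q n)) : w ∈ WsLoc f c z := by
  intro k hk
  refine le_of_tendsto ((((iterZ_cont f k).tendsto _).comp hq).dist
    (((iterZ_cont f k).tendsto _).comp hs)) ?_
  filter_upwards [h] with n hn
  exact hn k hk

lemma WuLoc_limit (f : X ≃ₜ X) (c : ℝ) {q s : ℕ → X} {z w : X}
    (hq : Filter.Tendsto q Filter.atTop (nhds z)) (hs : Filter.Tendsto s Filter.atTop (nhds w))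
    (h : ∀ᶠ n in Filter.atTop, s n ∈ WuLoc f c (q n)) : w ∈ WuLoc f c z := by
  intro k hk
  refine le_of_tendsto ((((iterZ_cont f k).tendsto _).comp hq).dist
    (((iterZ_cont f k).tendsto _).comp hs)) ?_
  filter_upwards [h] with n hn
  exact hn k hk

lemma WsLoc_closed (f : X ≃ₜ X) (c : ℝ) (z : X) : IsClosed (WsLoc f c z) := by
  have : WsLoc f c z = ⋂ k : ℤ, ⋂ _ : 0 ≤ k, {y | dist (iterZ f k z) (iterZ f k y) ≤ c} := by
    ext y; simp [WsLoc]
  rw [this]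
  exact isClosed_iInter fun k => isClosed_iInter fun _ =>
    isClosed_le (continuous_const.dist (iterZ_cont f k)) continuous_const

lemma loc_inter (f : X ≃ₜ X) (α c : ℝ) (hc : c ≤ α) (hexp : IsExpansive f α) {z a : X}
    (hs : a ∈ WsLoc f c z) (hu : a ∈ WuLoc f c z) : a = z := by
  by_contra hne
  obtain ⟨k, hk⟩ := hexp z a (Ne.symm hne)
  rcases le_total 0 k with h | h
  · have := hs k h; linarith
  · have := hu k h; linarith

lemma Ws_of_tendsto (f : X ≃ₜ X) (l : ℕ) (hl : 1 ≤ l) (q : X) (hq : iterZ f l q = q) (y : X)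
    (h : Filter.Tendsto (fun k : ℕ => iterZ f ((l : ℤ) * k) y) Filter.atTop (nhds q)) :
    y ∈ Ws f q := by
  refine Metric.tendsto_atTop.2 fun η hη => ?_
  have hO : ∀ᶠ u in nhds q, ∀ j ∈ Finset.range l, dist (iterZ f j q) (iterZ f j u) < η := by
    rw [Filter.eventually_all_finset]
    intro j _
    have hc : Continuous fun u => dist (iterZ f j q) (iterZ f j u) :=
      continuous_const.dist (iterZ_cont f j)
    have := hc.tendsto q
    rw [dist_self] at this
    exact this.eventually (gt_mem_nhds hη)
  obtain ⟨K, hK⟩ := Filter.eventually_atTop.1 (h.eventually hO)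
  refine ⟨(l : ℤ) * K, fun m hm => ?_⟩
  have hl' : (0 : ℤ) < l := by exact_mod_cast hl
  obtain ⟨j, hj⟩ := Int.eq_ofNat_of_zero_le (Int.emod_nonneg m hl'.ne')
  have hjl : j < l := by have := Int.emod_lt_of_pos m hl'; omega
  have hdm := Int.emod_add_mul_ediv m l
  have hkK : (K : ℤ) ≤ m / l := by
    rw [Int.le_ediv_iff_mul_le hl']; linarith [mul_comm (K : ℤ) l]
  obtain ⟨k, hk⟩ := Int.eq_ofNat_of_zero_le (le_trans (Int.natCast_nonneg K) hkK)
  have hm' : m = j + (l : ℤ) * k := by rw [← hk, ← hj]; exact hdm.symm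
  have := hK k (by omega) j (Finset.mem_range.2 hjl)
  rw [hm', iterZ_add, iterZ_add, iterZ_per f l q hq k]
  simpa [Real.dist_eq, abs_of_nonneg dist_nonneg] using this

lemma tendsto_of_Ws (f : X ≃ₜ X) (l : ℕ) (hl : 1 ≤ l) (q : X) (hq : iterZ f l q = q) (y : X)
    (h : y ∈ Ws f q) :
    Filter.Tendsto (fun k : ℕ => iterZ f ((l : ℤ) * k) y) Filter.atTop (nhds q) := by
  have h1 : Filter.Tendsto (fun k : ℕ => (l : ℤ) * k) Filter.atTop Filter.atTop := by
    apply Filter.Tendsto.const_mul_atTop' (by exact_mod_cast hl)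
    exact tendsto_natCast_atTop_atTop
  have h2 := Filter.Tendsto.comp h h1
  rw [tendsto_iff_dist_tendsto_zero]
  refine h2.congr fun k => ?_
  simp only [Function.comp]
  rw [iterZ_per f l q hq k, dist_comm]

lemma Wu_of_Ws_symm (f : X ≃ₜ X) (q y : X) (h : y ∈ Ws f.symm q) : y ∈ Wu f q := by
  have := Filter.Tendsto.comp h Filter.tendsto_neg_atBot_atTop
  refine this.congr fun k => ?_
  simp [Function.comp, iterZ_symm]

lemma Wu_of_tendsto (f : X ≃ₜ X) (l : ℕ) (hl : 1 ≤ l) (q : X) (hq : iterZ f l q = q) (y : X)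
    (h : Filter.Tendsto (fun k : ℕ => iterZ f (-((l : ℤ) * k)) y) Filter.atTop (nhds q)) :
    y ∈ Wu f q := by
  apply Wu_of_Ws_symm
  apply Ws_of_tendsto f.symm l hl q
  · rw [iterZ_symm]
    have := iterZ_per_neg f l q hq 1
    simpa using this
  · simpa [iterZ_symm] using h

/-- A box chart around a periodic point in which `f^l` is the model map. -/
structure LocChart {E : Type*} [NormedAddCommGroup E] [NormedSpace ℝ E]
    (f : X ≃ₜ X) (q : X) (l : ℕ) (φ : E × ℝ → X) (ρ : ℝ) : Prop where
  hl : 1 ≤ l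
  per : iterZ f l q = q
  hρ : 0 < ρ
  cont : ContinuousOn φ (ball 0 ρ)
  inj : InjOn φ (ball 0 ρ)
  opn : ∀ W : Set (E × ℝ), W ⊆ ball 0 ρ → IsOpen W → IsOpen (φ '' W)
  zero : φ 0 = q
  dyn : ∀ v ∈ ball (0 : E × ℝ) ρ, ∀ w ∈ ball (0 : E × ℝ) ρ,
    iterZ f l (φ v) = φ w ↔ w = ((2 : ℝ)⁻¹ • v.1, 2 * v.2)

lemma exists_chart (f : X ≃ₜ X) (n : ℕ) (hn : 1 ≤ n) (q : X) (hq : q ∈ PerHr f n (n - 1)) :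
    ∃ (l : ℕ) (φ : (Fin (n - 1) → ℝ) × ℝ → X) (ρ : ℝ), LocChart f q l φ ρ := by
  obtain ⟨l, hl, hper, U, V, h, hU, hV, h0, hp, hhp, hdyn⟩ := hq
  have hcard : n - (n - 1) = 1 := by omega
  have : Unique (Fin (n - (n - 1))) := by rw [hcard]; infer_instance
  let g : (Fin (n - 1) → ℝ) × ℝ → ModelSp n (n - 1) := fun v => (v.1, fun _ => v.2)
  have hg : Continuous g := by fun_prop
  let g' : ModelSp n (n - 1) → (Fin (n - 1) → ℝ) × ℝ := fun v => (v.1, v.2 default)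
  have hg' : Continuous g' := by fun_prop
  have hgg' : ∀ v, g (g' v) = v := by
    intro v
    refine Prod.ext rfl ?_
    funext i
    simp only [g, g']
    rw [Subsingleton.elim i default]
  have hg'g : ∀ v, g' (g v) = v := fun v => rfl
  have hg0 : g 0 = 0 := rfl
  have hgL : ∀ v, modelL n (n - 1) (g v) = g ((2 : ℝ)⁻¹ • v.1, 2 * v.2) := by
    intro v
    refine Prod.ext ?_ rfl
    funext i
    simp [modelL, g]; ring
  classical
  let φ : (Fin (n - 1) → ℝ) × ℝ → X := fun v =>
    if hv : g v ∈ V then (h.symm ⟨g v, hv⟩ : X) else q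
  have hφ : ∀ v (hv : g v ∈ V), φ v = (h.symm ⟨g v, hv⟩ : X) := fun v hv => dif_pos hv
  have hφU : ∀ v, g v ∈ V → φ v ∈ U := fun v hv => by rw [hφ v hv]; exact Subtype.coe_prop _
  have hhφ : ∀ v (hv : g v ∈ V), h ⟨φ v, hφU v hv⟩ = ⟨g v, hv⟩ := by
    intro v hv
    rw [← h.apply_symm_apply ⟨g v, hv⟩]
    congr 1
    exact Subtype.ext (hφ v hv)
  have hφ0 : φ 0 = q := by
    have h0' : g 0 ∈ V := h0
    rw [hφ 0 h0']
    have : h.symm ⟨g 0, h0'⟩ = ⟨q, hp⟩ := by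
      rw [h.symm_apply_eq]; exact Subtype.ext hhp.symm
    rw [this]
  have hcont : ContinuousOn φ (g ⁻¹' V) := by
    rw [continuousOn_iff_continuous_domRestrict]
    have : (g ⁻¹' V).domRestrict φ = fun v => (h.symm ⟨g v.1, v.2⟩ : X) := by
      funext v; exact hφ v.1 v.2
    rw [this]
    exact continuous_subtype_val.comp (h.symm.continuous.comp
      ((hg.comp continuous_subtype_val).subtype_mk _))
  have hVo : IsOpen (g ⁻¹' V) := hV.preimage hg
  have hflU : IsOpen {v | v ∈ g ⁻¹' V ∧ iterZ f l (φ v) ∈ U} :=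
    ((iterZ_cont f l).comp_continuousOn hcont).isOpen_inter_preimage hVo hU
  have hper' : iterZ f l q = q := by rw [iterZ_nat]; exact hper
  obtain ⟨ρ, hρ, hball⟩ := Metric.isOpen_iff.1 hflU 0
    ⟨h0, by rw [hφ0, hper']; exact hp⟩
  have hbV : ∀ v ∈ ball (0 : (Fin (n - 1) → ℝ) × ℝ) ρ, g v ∈ V := fun v hv => (hball hv).1
  have hinj : InjOn φ (ball 0 ρ) := by
    intro v hv w hw hvw
    have e1 := hhφ v (hbV v hv)
    have e2 := hhφ w (hbV w hw)
    simp only [hvw] at e1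
    rw [e1] at e2
    have := congrArg (fun t : V => g' t.1) e2
    simpa [hg'g] using this
  refine ⟨l, φ, ρ, hl, hper', hρ, hcont.mono hbV, hinj, ?_, hφ0, ?_⟩
  · intro W hW hWo
    have : φ '' W = Subtype.val '' (h ⁻¹' (Subtype.val ⁻¹' (g' ⁻¹' W))) := by
      ext y
      constructor
      · rintro ⟨v, hv, rfl⟩
        refine ⟨⟨φ v, hφU v (hbV v (hW hv))⟩, ?_, rfl⟩
        simp only [mem_preimage]
        rw [hhφ v (hbV v (hW hv))]
        exact hv
      · rintro ⟨y, hy, rfl⟩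
        refine ⟨_, hy, ?_⟩
        have hyV : g (g' (h y).1) ∈ V := by rw [hgg']; exact (h y).2
        rw [hφ _ hyV]
        congr 1
        rw [h.symm_apply_eq]
        exact Subtype.ext (hgg' _)
    rw [this]
    exact hU.isOpenMap_subtype_val _ ((((hWo.preimage hg').preimage continuous_subtype_val)).preimage
      h.continuous)
  · intro v hv w hw
    have hfU := (hball hv).2
    rw [iterZ_nat] at hfU ⊢
    have hd := hdyn (φ v) (hφU v (hbV v hv)) hfU
    rw [hhφ v (hbV v hv)] at hd
    simp only at hd
    rw [hgL] at hd
    constructor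
    · intro he
      simp only [he] at hd
      rw [hhφ w (hbV w hw)] at hd
      have := congrArg g' hd
      simpa [hg'g] using this
    · intro he
      rw [← he] at hd
      have e3 : h ⟨_, hfU⟩ = h ⟨φ w, hφU w (hbV w hw)⟩ := by
        rw [hhφ w (hbV w hw)]; exact Subtype.ext hd
      have := h.injective e3
      exact congrArg Subtype.val this

namespace LocChart

variable {E : Type*} [NormedAddCommGroup E] [NormedSpace ℝ E]
  {f : X ≃ₜ X} {q : X} {l : ℕ} {φ : E × ℝ → X} {ρ : ℝ}

lemma mem_box {a : E} {t ρ : ℝ} : (a, t) ∈ ball (0 : E × ℝ) ρ ↔ ‖a‖ < ρ ∧ |t| < ρ := by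
  rw [mem_ball_zero_iff, Prod.norm_def, max_lt_iff, Real.norm_eq_abs]

lemma fwd (h : LocChart f q l φ ρ) {a : E} (ha : ‖a‖ < ρ) (k : ℕ) :
    iterZ f ((l : ℤ) * k) (φ (a, 0)) = φ (((2 : ℝ)⁻¹ ^ k) • a, 0) := by
  have hb : ∀ k : ℕ, ‖((2 : ℝ)⁻¹ ^ k) • a‖ < ρ := by
    intro k
    rw [norm_smul]
    have h1 : ‖(2 : ℝ)⁻¹ ^ k‖ ≤ 1 := by
      rw [norm_pow]; exact pow_le_one₀ (norm_nonneg _) (by norm_num)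
    have := norm_nonneg a
    nlinarith
  induction k with
  | zero => simp [iterZ_zero]
  | succ i ih =>
    have : (l : ℤ) * ((i + 1 : ℕ) : ℤ) = l + l * i := by push_cast; ring
    rw [this, iterZ_add, ih]
    refine (h.dyn _ (mem_box.2 ⟨hb i, by simpa using h.hρ⟩) _
      (mem_box.2 ⟨hb (i + 1), by simpa using h.hρ⟩)).2 ?_
    simp only [mul_zero, smul_smul, pow_succ']

lemma bwd (h : LocChart f q l φ ρ) {k : ℕ} {t : ℝ} (ht : |2 ^ k * t| < ρ) :
    iterZ f ((l : ℤ) * (k : ℕ)) (φ (0, t)) = φ (0, 2 ^ k * t) := by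
  induction k with
  | zero => simp [iterZ_zero]
  | succ i ih =>
    have hle : |2 ^ i * t| < ρ := by
      refine lt_of_le_of_lt ?_ ht
      rw [pow_succ', mul_assoc, abs_mul 2, abs_two]
      have := abs_nonneg (2 ^ i * t)
      linarith
    have : (l : ℤ) * ((i + 1 : ℕ) : ℤ) = l + l * i := by push_cast; ring
    rw [this, iterZ_add, ih hle]
    refine (h.dyn _ (mem_box.2 ⟨by simpa using h.hρ, hle⟩) _
      (mem_box.2 ⟨by simpa using h.hρ, ht⟩)).2 ?_
    simp only [smul_zero]
    congr 1
    ring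

lemma contAt (h : LocChart f q l φ ρ) {v : E × ℝ} (hv : v ∈ ball 0 ρ) : ContinuousAt φ v :=
  h.cont.continuousAt (isOpen_ball.mem_nhds hv)

lemma zero_mem (h : LocChart f q l φ ρ) : (0 : E × ℝ) ∈ ball 0 ρ := mem_ball_self h.hρ

lemma plane_Ws (h : LocChart f q l φ ρ) {a : E} (ha : ‖a‖ < ρ) : φ (a, 0) ∈ Ws f q := by
  apply Ws_of_tendsto f l h.hl q h.per
  simp only [h.fwd ha]
  have h1 : Filter.Tendsto (fun k : ℕ => (((2 : ℝ)⁻¹ ^ k) • a, (0 : ℝ))) Filter.atTop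
      (nhds (0 : E × ℝ)) := by
    have h2 : Filter.Tendsto (fun k : ℕ => ((2 : ℝ)⁻¹ ^ k)) Filter.atTop (nhds 0) :=
      tendsto_pow_atTop_nhds_zero_of_lt_one (by norm_num) (by norm_num)
    have h3 := h2.smul_const a
    rw [zero_smul] at h3
    exact h3.prodMk_nhds tendsto_const_nhds
  have := (h.contAt h.zero_mem).tendsto.comp h1
  rw [h.zero] at this
  exact this

lemma axis_Wu (h : LocChart f q l φ ρ) {t : ℝ} (ht : |t| < ρ) : φ (0, t) ∈ Wu f q := by
  apply Wu_of_tendsto f l h.hl q h.per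
  have h1 : ∀ k : ℕ, iterZ f (-((l : ℤ) * k)) (φ (0, t)) = φ (0, (2 : ℝ)⁻¹ ^ k * t) := by
    intro k
    have e : (2 : ℝ) ^ k * ((2 : ℝ)⁻¹ ^ k * t) = t := by
      rw [← mul_assoc, ← mul_pow]; norm_num
    have := h.bwd (k := k) (t := (2 : ℝ)⁻¹ ^ k * t) (by rw [e]; exact ht)
    rw [e] at this
    rw [← this, iterZ_neg_cancel]
  simp only [h1]
  have h1 : Filter.Tendsto (fun k : ℕ => ((0 : E), ((2 : ℝ)⁻¹ ^ k) * t)) Filter.atTop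
      (nhds (0 : E × ℝ)) := by
    have h2 : Filter.Tendsto (fun k : ℕ => ((2 : ℝ)⁻¹ ^ k)) Filter.atTop (nhds 0) :=
      tendsto_pow_atTop_nhds_zero_of_lt_one (by norm_num) (by norm_num)
    have h3 := h2.mul_const t
    rw [zero_mul] at h3
    exact tendsto_const_nhds.prodMk_nhds h3
  have := (h.contAt h.zero_mem).tendsto.comp h1
  rw [h.zero] at this
  exact this

lemma plane_nhd [CompactSpace X] (h : LocChart f q l φ ρ) (α : ℝ) (hexp : IsExpansive f α) :
    ∃ N : Set X, IsOpen N ∧ q ∈ N ∧ N ⊆ φ '' ball 0 ρ ∧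
      ∀ v ∈ ball (0 : E × ℝ) ρ, φ v ∈ N → φ v ∈ WsLoc f α q → v.2 = 0 := by
  have hO : IsOpen (φ '' ball 0 ρ) := h.opn _ Subset.rfl isOpen_ball
  obtain ⟨η, hη, hηO⟩ := Metric.isOpen_iff.1 hO q ⟨0, h.zero_mem, h.zero⟩
  obtain ⟨K, hK⟩ := WsLoc_unif f α hexp η hη
  refine ⟨⋂ k ∈ Finset.range (K + 1), iterZ f ((l : ℤ) * k) ⁻¹' ball q η, ?_, ?_, ?_, ?_⟩
  · exact isOpen_biInter_finset fun k _ => isOpen_ball.preimage (iterZ_cont f _)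
  · simp only [mem_iInter]
    intro k _
    rw [mem_preimage, iterZ_per f l q h.per k]
    exact mem_ball_self hη
  · intro y hy
    simp only [mem_iInter] at hy
    have := hy 0 (by simp)
    simp only [mem_preimage, Nat.cast_zero, mul_zero, iterZ_zero] at this
    exact hηO this
  · intro v hv hN hs
    simp only [mem_iInter] at hN
    have hall : ∀ k : ℕ, iterZ f ((l : ℤ) * k) (φ v) ∈ φ '' ball 0 ρ := by
      intro k
      apply hηO
      by_cases hk : k < K + 1
      · exact hN k (Finset.mem_range.2 hk)
      · have hlk : (K : ℤ) ≤ (l : ℤ) * k := by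
          have h1 : k ≤ l * k := Nat.le_mul_of_pos_left k h.hl
          have h2 : K ≤ l * k := by omega
          exact_mod_cast h2
        have := hK q (φ v) hs _ hlk
        rw [iterZ_per f l q h.per k] at this
        rw [mem_ball, dist_comm]; exact this
    choose w hw hwe using hall
    have hstep : ∀ k, (w k).2 = 2 ^ k * v.2 := by
      intro k
      induction k with
      | zero =>
        have := hwe 0
        simp only [Nat.cast_zero, mul_zero, iterZ_zero] at this
        rw [h.inj (hw 0) hv this]; simp
      | succ i ih =>
        have h1 := hwe (i + 1)
        have : (l : ℤ) * ((i + 1 : ℕ) : ℤ) = l + l * i := by push_cast; ring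
        rw [this, iterZ_add, ← hwe i] at h1
        have h2 := (h.dyn _ (hw i) _ (hw (i + 1))).1 h1.symm
        rw [h2]
        simp only [ih]; ring
    by_contra hne
    have hpos : 0 < |v.2| := abs_pos.2 hne
    obtain ⟨k, hk⟩ := pow_unbounded_of_one_lt (ρ / |v.2|) (one_lt_two (α := ℝ))
    have h3 := (mem_box.1 (show ((w k).1, (w k).2) ∈ ball 0 ρ from hw k)).2
    rw [hstep, abs_mul, abs_of_pos (by positivity : (0 : ℝ) < 2 ^ k)] at h3
    rw [div_lt_iff₀ hpos] at hk
    linarith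

end LocChart

/-- `S` is locally two-sided at `w` inside `B`. -/
def FlatAt (B S : Set X) (w : X) (O H₁ H₂ : Set X) : Prop :=
  IsOpen O ∧ w ∈ O ∧ IsPreconnected H₁ ∧ IsPreconnected H₂ ∧ H₁ ⊆ B \ S ∧ H₂ ⊆ B \ S ∧
    O ⊆ S ∪ (H₁ ∪ H₂) ∧ O ∩ S ⊆ closure H₁ ∧ O ∩ S ⊆ closure H₂

lemma comp_disjoint {F : Set X} {a b y : X} (ha : y ∈ connectedComponentIn F a)
    (hb : y ∈ connectedComponentIn F b) :
    connectedComponentIn F a = connectedComponentIn F b :=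
  (connectedComponentIn_eq ha).trans (connectedComponentIn_eq hb).symm

lemma sub_comp {F H : Set X} {a y : X} (hH : IsPreconnected H) (hF : H ⊆ F) (hy : y ∈ H)
    (hya : y ∈ connectedComponentIn F a) : H ⊆ connectedComponentIn F a := by
  rw [connectedComponentIn_eq hya]
  exact hH.subset_connectedComponentIn hy hF

lemma comp_closure [LocallyConnectedSpace X] {B S : Set X} (hB : IsPreconnected B)
    (hSB : S ⊆ B) (hS : IsPreconnected S) (hSne : S.Nonempty) (hop : IsOpen (B \ S))
    (hflat : ∀ w ∈ S, ∃ O H₁ H₂, FlatAt B S w O H₁ H₂) {y : X} (hy : y ∈ B \ S) :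
    S ⊆ closure (connectedComponentIn (B \ S) y) := by
  set V := connectedComponentIn (B \ S) y with hV
  have hVo : IsOpen V := hop.connectedComponentIn
  have hyV : y ∈ V := mem_connectedComponentIn hy
  have hVs : V ⊆ B \ S := connectedComponentIn_subset _ _
  -- some point of `S` lies in the closure
  have hne : (S ∩ closure V).Nonempty := by
    by_contra hem
    rw [not_nonempty_iff_eq_empty] at hem
    have hsub : B ⊆ V := by
      refine hB.subset_of_closure_inter_subset hVo ⟨y, hy.1, hyV⟩ ?_
      rintro w ⟨hw, hwB⟩
      by_cases hwS : w ∈ S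
      · exact absurd (show w ∈ S ∩ closure V from ⟨hwS, hw⟩) (by rw [hem]; exact notMem_empty w)
      · have hwc : w ∈ connectedComponentIn (B \ S) w := mem_connectedComponentIn ⟨hwB, hwS⟩
        obtain ⟨u, hu1, hu2⟩ := mem_closure_iff.1 hw _ (hop.connectedComponentIn (x := w)) hwc
        rw [hV, comp_disjoint hu2 hu1]; exact hwc
    obtain ⟨s, hs⟩ := hSne
    exact (hVs (hsub (hSB hs))).2 hs
  -- openness of `S ∩ closure V` in `S`
  have hopen : ∀ w ∈ S ∩ closure V, ∃ O, IsOpen O ∧ w ∈ O ∧ O ∩ S ⊆ closure V := by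
    rintro w ⟨hwS, hwV⟩
    obtain ⟨O, H₁, H₂, hO, hwO, h1, h2, h1s, h2s, hcov, hc1, hc2⟩ := hflat w hwS
    refine ⟨O, hO, hwO, ?_⟩
    obtain ⟨u, huO, huV⟩ := mem_closure_iff.1 hwV O hO hwO
    rcases hcov huO with h | h | h
    · exact absurd h (hVs huV).2
    · exact hc1.trans (closure_mono (sub_comp h1 h1s h huV))
    · exact hc2.trans (closure_mono (sub_comp h2 h2s h huV))
  choose! O hO hwO hOs using hopen
  have hU : IsOpen (⋃ w ∈ S ∩ closure V, O w) := isOpen_biUnion hO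
  have := isPreconnected_iff_subset_of_disjoint.1 hS (⋃ w ∈ S ∩ closure V, O w) (closure V)ᶜ hU
    isClosed_closure.isOpen_compl ?_ ?_
  · rcases this with h | h
    · intro s hs
      obtain ⟨w, hw, hsw⟩ := mem_iUnion₂.1 (h hs)
      exact hOs w hw ⟨hsw, hs⟩
    · obtain ⟨s, hs, hsV⟩ := hne
      exact absurd hsV (h hs)
  · intro s hs
    by_cases hsV : s ∈ closure V
    · exact Or.inl (mem_iUnion₂.2 ⟨s, ⟨hs, hsV⟩, hwO s ⟨hs, hsV⟩⟩)
    · exact Or.inr hsV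
  · rw [eq_empty_iff_forall_notMem]
    rintro s ⟨hs, hs1, hs2⟩
    obtain ⟨w, hw, hsw⟩ := mem_iUnion₂.1 hs1
    exact hs2 (hOs w hw ⟨hsw, hs⟩)

/-- The two local sides are in different components. -/
lemma two_sides [LocallyConnectedSpace X] {B S : Set X} (hB : IsPreconnected B)
    (hSB : S ⊆ B) (hS : IsPreconnected S) (hop : IsOpen (B \ S))
    (hflat : ∀ w ∈ S, ∃ O H₁ H₂, FlatAt B S w O H₁ H₂) {x y : X} (hx : x ∈ B \ S)
    (hy : y ∈ B \ S) (hxy : connectedComponentIn (B \ S) x ≠ connectedComponentIn (B \ S) y)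
    {q : X} (hq : q ∈ S) {O H₁ H₂ : Set X} (hO : FlatAt B S q O H₁ H₂) :
    (H₁ ⊆ connectedComponentIn (B \ S) x ∧ Disjoint H₂ (connectedComponentIn (B \ S) x)) ∨
    (H₂ ⊆ connectedComponentIn (B \ S) x ∧ Disjoint H₁ (connectedComponentIn (B \ S) x)) := by
  have cx := comp_closure hB hSB hS ⟨q, hq⟩ hop hflat hx hq
  have cy := comp_closure hB hSB hS ⟨q, hq⟩ hop hflat hy hq
  obtain ⟨hO, hqO, h1, h2, h1s, h2s, hcov, -, -⟩ := hO
  have hdis : Disjoint (connectedComponentIn (B \ S) y) (connectedComponentIn (B \ S) x) := by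
    rw [Set.disjoint_left]
    intro u hu hu'
    exact hxy (comp_disjoint hu' hu)
  obtain ⟨u, huO, hu⟩ := mem_closure_iff.1 cx O hO hqO
  obtain ⟨v, hvO, hv⟩ := mem_closure_iff.1 cy O hO hqO
  rcases hcov huO with h | h | h
  · exact absurd h (connectedComponentIn_subset _ _ hu).2
  · have k1 := sub_comp h1 h1s h hu
    left; refine ⟨k1, ?_⟩
    rcases hcov hvO with h' | h' | h'
    · exact absurd h' (connectedComponentIn_subset _ _ hv).2
    · exact absurd (k1 h') (Set.disjoint_left.1 hdis hv)
    · exact hdis.mono_left (sub_comp h2 h2s h' hv)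
  · have k1 := sub_comp h2 h2s h hu
    right; refine ⟨k1, ?_⟩
    rcases hcov hvO with h' | h' | h'
    · exact absurd h' (connectedComponentIn_subset _ _ hv).2
    · exact hdis.mono_left (sub_comp h1 h1s h' hv)
    · exact absurd (k1 h') (Set.disjoint_left.1 hdis hv)

section FlatChart

variable {E : Type*} [NormedAddCommGroup E] [NormedSpace ℝ E]

/-- A chart in which `S` is the hyperplane `t = 0` yields flatness. -/
lemma flat_of_chart {B S : Set X} {ψ : E × ℝ → X} {a : E} {r : ℝ} (hr : 0 < r)
    (hcont : ContinuousOn ψ (ball (a, 0) r)) (hop : IsOpen (ψ '' ball (a, 0) r))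
    (hB : ψ '' ball (a, 0) r ⊆ B)
    (hS : ∀ v ∈ ball (a, (0 : ℝ)) r, ψ v ∈ S ↔ v.2 = 0) :
    FlatAt B S (ψ (a, 0)) (ψ '' ball (a, 0) r)
      (ψ '' (ball a r ×ˢ Ioo 0 r)) (ψ '' (ball a r ×ˢ Ioo (-r) 0)) := by
  have hball : ball (a, (0 : ℝ)) r = ball a r ×ˢ Ioo (-r) r := by
    rw [← ball_prod_same, Real.ball_eq_Ioo]; simp
  have s1 : ball a r ×ˢ Ioo 0 r ⊆ ball (a, (0 : ℝ)) r := by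
    rw [hball]; exact prod_mono Subset.rfl (Ioo_subset_Ioo (by linarith) le_rfl)
  have s2 : ball a r ×ˢ Ioo (-r) 0 ⊆ ball (a, (0 : ℝ)) r := by
    rw [hball]; exact prod_mono Subset.rfl (Ioo_subset_Ioo le_rfl hr.le)
  have hpc : IsPreconnected (ball a r) := (convex_ball a r).isPreconnected
  have hcl : ∀ (T : Set (E × ℝ)), T ⊆ ball (a, (0 : ℝ)) r →
      (∀ b ∈ ball a r, (b, (0 : ℝ)) ∈ closure T) →
      ψ '' ball (a, 0) r ∩ S ⊆ closure (ψ '' T) := by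
    rintro T hT hb _ ⟨⟨v, hv, rfl⟩, hvS⟩
    have h0 := (hS v hv).1 hvS
    have hv' := hv
    rw [hball] at hv'
    have hvT : v ∈ closure T := by
      have := hb v.1 hv'.1
      rwa [← h0] at this
    have hca : ContinuousAt ψ v := hcont.continuousAt (isOpen_ball.mem_nhds hv)
    exact mem_closure_image hca hvT
  refine ⟨hop, mem_image_of_mem _ (mem_ball_self hr), ?_, ?_, ?_, ?_, ?_, ?_, ?_⟩
  · exact (hpc.prod isPreconnected_Ioo).image _ (hcont.mono s1)
  · exact (hpc.prod isPreconnected_Ioo).image _ (hcont.mono s2)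
  · rintro _ ⟨v, hv, rfl⟩
    exact ⟨hB (mem_image_of_mem _ (s1 hv)), fun h => hv.2.1.ne' ((hS v (s1 hv)).1 h)⟩
  · rintro _ ⟨v, hv, rfl⟩
    exact ⟨hB (mem_image_of_mem _ (s2 hv)), fun h => hv.2.2.ne ((hS v (s2 hv)).1 h)⟩
  · rintro _ ⟨v, hv, rfl⟩
    have hv' := hv
    rw [hball] at hv'
    rcases lt_trichotomy v.2 0 with h | h | h
    · exact Or.inr (Or.inr ⟨v, ⟨hv'.1, hv'.2.1, h⟩, rfl⟩)
    · exact Or.inl ((hS v hv).2 h)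
    · exact Or.inr (Or.inl ⟨v, ⟨hv'.1, h, hv'.2.2⟩, rfl⟩)
  · refine hcl _ s1 fun b hb => ?_
    rw [closure_prod_eq, closure_Ioo hr.ne]
    exact ⟨subset_closure hb, le_rfl, hr.le⟩
  · refine hcl _ s2 fun b hb => ?_
    rw [closure_prod_eq, closure_Ioo (by linarith)]
    exact ⟨subset_closure hb, by linarith, le_rfl⟩

end FlatChart

lemma Ws_shift (f : X ≃ₜ X) {q y : X} (j : ℤ) (h : y ∈ Ws f q) :
    iterZ f j y ∈ Ws f (iterZ f j q) := by
  have h1 : Filter.Tendsto (fun k : ℤ => k + j) Filter.atTop Filter.atTop :=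
    Filter.tendsto_atTop_add_const_right _ j Filter.tendsto_id
  refine (Filter.Tendsto.comp h h1).congr fun k => ?_
  simp only [Function.comp, iterZ_add]

lemma Wu_shift (f : X ≃ₜ X) {q y : X} (j : ℤ) (h : y ∈ Wu f q) :
    iterZ f j y ∈ Wu f (iterZ f j q) := by
  have h1 : Filter.Tendsto (fun k : ℤ => k + j) Filter.atBot Filter.atBot :=
    Filter.tendsto_atBot_add_const_right _ j Filter.tendsto_id
  refine (Filter.Tendsto.comp h h1).congr fun k => ?_
  simp only [Function.comp, iterZ_add]

section Local

variable [CompactSpace X] {f : X ≃ₜ X} {α ε ν : ℝ} {x q : X}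

lemma Sp_self (hq : q ∈ ball x ν) : q ∈ SpSet f x ν q :=
  mem_connectedComponentIn ⟨Ws_self f q, hq⟩

lemma Sp_sub_ball : SpSet f x ν q ⊆ ball x ν :=
  (connectedComponentIn_subset _ _).trans inter_subset_right

lemma Sp_eq {t r w : X} (ht : w ∈ SpSet f x ν t) (hr : w ∈ SpSet f x ν r) :
    SpSet f x ν t = SpSet f x ν r := by
  have h1 := (connectedComponentIn_subset _ _ ht).1
  have h2 := (connectedComponentIn_subset _ _ hr).1
  have e : Ws f t = Ws f r := (Ws_eq f h1).symm.trans (Ws_eq f h2)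
  unfold SpSet at *
  rw [e] at ht ⊢
  exact comp_disjoint ht hr

lemma Sp_closed (hexp : IsExpansive f α) (hεα : ε ≤ α)
    (hs : SpSet f x ν q ⊆ WsLoc f ε q) : closure (SpSet f x ν q) ∩ ball x ν ⊆ SpSet f x ν q := by
  by_cases hne : (SpSet f x ν q).Nonempty
  · obtain ⟨s, hsS⟩ := hne
    have hpc : IsPreconnected (closure (SpSet f x ν q) ∩ ball x ν) :=
      IsPreconnected.subset_closure (isPreconnected_connectedComponentIn)
        (subset_inter subset_closure Sp_sub_ball) inter_subset_left
    refine sub_comp hpc ?_ ⟨subset_closure hsS, Sp_sub_ball hsS⟩ hsS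
    rintro w ⟨hw, hwB⟩
    refine ⟨?_, hwB⟩
    have := closure_minimal hs (WsLoc_closed f ε q) hw
    exact WsLoc_sub_Ws f α hexp q (WsLoc_mono f hεα q this)
  · rw [not_nonempty_iff_eq_empty] at hne
    simp [hne]

lemma Sp_open (hexp : IsExpansive f α) (hεα : ε ≤ α)
    (hs : SpSet f x ν q ⊆ WsLoc f ε q) : IsOpen (ball x ν \ SpSet f x ν q) := by
  have : ball x ν \ SpSet f x ν q = ball x ν \ closure (SpSet f x ν q) := by
    ext w
    exact ⟨fun h => ⟨h.1, fun h' => h.2 (Sp_closed hexp hεα hs ⟨h', h.1⟩)⟩,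
      fun h => ⟨h.1, fun h' => h.2 (subset_closure h')⟩⟩
  rw [this]
  exact isOpen_ball.sdiff isClosed_closure

variable {E : Type*} [NormedAddCommGroup E] [NormedSpace ℝ E] {l : ℕ} {φ : E × ℝ → X} {ρ : ℝ}

lemma flat_core (h : LocChart f q l φ ρ) (hεα : ε ≤ α)
    (hs : SpSet f x ν q ⊆ WsLoc f ε q) {N : Set X} (hN : IsOpen N)
    (hplane : ∀ v ∈ ball (0 : E × ℝ) ρ, φ v ∈ N → φ v ∈ WsLoc f α q → v.2 = 0)
    {w : X} (hw : w ∈ SpSet f x ν q) (k : ℕ) {a : E} (ha : ‖a‖ < ρ)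
    (hwa : iterZ f ((l : ℤ) * k) w = φ (a, 0)) (haN : φ (a, 0) ∈ N) :
    ∃ r > 0, FlatAt (ball x ν) (SpSet f x ν q) w
      ((fun v => iterZ f (-((l : ℤ) * k)) (φ v)) '' ball (a, 0) r)
      ((fun v => iterZ f (-((l : ℤ) * k)) (φ v)) '' (ball a r ×ˢ Ioo 0 r))
      ((fun v => iterZ f (-((l : ℤ) * k)) (φ v)) '' (ball a r ×ˢ Ioo (-r) 0)) := by
  set ψ : E × ℝ → X := fun v => iterZ f (-((l : ℤ) * k)) (φ v) with hψ
  have hψa : ψ (a, 0) = w := by simp only [hψ, ← hwa, iterZ_neg_cancel]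
  have hψc : ContinuousOn ψ (ball 0 ρ) := (iterZ_cont f _).comp_continuousOn h.cont
  have ho1 : IsOpen (ball 0 ρ ∩ φ ⁻¹' N) := h.cont.isOpen_inter_preimage isOpen_ball hN
  have ho2 : IsOpen (ball 0 ρ ∩ ψ ⁻¹' ball x ν) := hψc.isOpen_inter_preimage isOpen_ball isOpen_ball
  have ha0 : (a, (0 : ℝ)) ∈ ball (0 : E × ℝ) ρ := LocChart.mem_box.2 ⟨ha, by simpa using h.hρ⟩
  obtain ⟨r, hr, hrs⟩ := Metric.isOpen_iff.1 (ho1.inter ho2) (a, 0)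
    ⟨⟨ha0, haN⟩, ha0, by rw [mem_preimage, hψa]; exact Sp_sub_ball hw⟩
  have hrρ : ball (a, (0 : ℝ)) r ⊆ ball 0 ρ := fun v hv => (hrs hv).1.1
  refine ⟨r, hr, ?_⟩
  rw [show FlatAt (ball x ν) (SpSet f x ν q) w = FlatAt (ball x ν) (SpSet f x ν q) (ψ (a, 0)) by
    rw [hψa]]
  refine flat_of_chart hr (hψc.mono hrρ) ?_ ?_ ?_
  · have : ψ '' ball (a, 0) r = iterZ f ((l : ℤ) * k) ⁻¹' (φ '' ball (a, 0) r) := by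
      ext y
      constructor
      · rintro ⟨v, hv, rfl⟩
        exact ⟨v, hv, by simp only [hψ, iterZ_cancel_neg]⟩
      · rintro ⟨v, hv, hvy⟩
        exact ⟨v, hv, by simp only [hψ, hvy, iterZ_neg_cancel]⟩
    rw [this]
    exact (h.opn _ hrρ isOpen_ball).preimage (iterZ_cont f _)
  · rintro _ ⟨v, hv, rfl⟩
    exact (hrs hv).2.2
  · intro v hv
    constructor
    · intro hvS
      refine hplane v (hrρ hv) (hrs hv).1.2 ?_
      have h1 := WsLoc_mono f hεα q (hs hvS)
      intro j hj
      have h2 := h1 (j + (l : ℤ) * k) (by positivity)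
      rw [iterZ_add, iterZ_add, iterZ_per f l q h.per] at h2
      simpa only [hψ, iterZ_cancel_neg] using h2
    · intro hv0
      have hball : ball (a, (0 : ℝ)) r = ball a r ×ˢ ball 0 r := (ball_prod_same _ _ _).symm
      have hsub : ball a r ×ˢ {(0 : ℝ)} ⊆ ball (a, (0 : ℝ)) r := by
        rw [hball]
        exact prod_mono Subset.rfl (singleton_subset_iff.2 (mem_ball_self hr))
      have hpc : IsPreconnected (ψ '' (ball a r ×ˢ {(0 : ℝ)})) :=
        ((convex_ball a r).isPreconnected.prod isPreconnected_singleton).image _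
          ((hψc.mono hrρ).mono hsub)
      have key : ψ '' (ball a r ×ˢ {(0 : ℝ)}) ⊆ SpSet f x ν q := by
        refine sub_comp hpc ?_ (y := w) ⟨(a, 0), ⟨mem_ball_self hr, rfl⟩, hψa⟩ hw
        rintro _ ⟨u, hu, rfl⟩
        refine ⟨?_, (hrs (hsub hu)).2.2⟩
        have hu2 : u = (u.1, 0) := Prod.ext rfl hu.2
        have hu1 : ‖u.1‖ < ρ := by
          have := hrρ (hsub hu)
          exact (LocChart.mem_box.1 (show (u.1, u.2) ∈ ball 0 ρ from this)).1
        have h1 := Ws_shift f (-((l : ℤ) * k)) (h.plane_Ws hu1)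
        rw [iterZ_per_neg f l q h.per, ← hu2] at h1
        exact h1
      rw [hball] at hv
      exact key ⟨v, ⟨hv.1, hv0⟩, rfl⟩

lemma flat_all (h : LocChart f q l φ ρ) (hexp : IsExpansive f α) (hεα : ε ≤ α)
    (hs : SpSet f x ν q ⊆ WsLoc f ε q) {w : X} (hw : w ∈ SpSet f x ν q) :
    ∃ O H₁ H₂, FlatAt (ball x ν) (SpSet f x ν q) w O H₁ H₂ := by
  obtain ⟨N, hN, hqN, hNφ, hplane⟩ := h.plane_nhd α hexp
  have hwW : w ∈ Ws f q := (connectedComponentIn_subset _ _ hw).1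
  obtain ⟨k, hk⟩ := ((tendsto_of_Ws f l h.hl q h.per w hwW).eventually (hN.mem_nhds hqN)).exists
  obtain ⟨v, hv, hvw⟩ := hNφ hk
  have h0 : v.2 = 0 := by
    refine hplane v hv (by rw [hvw]; exact hk) ?_
    rw [hvw]
    intro j hj
    have h2 := WsLoc_mono f hεα q (hs hw) (j + (l : ℤ) * k) (by positivity)
    rw [iterZ_add, iterZ_add, iterZ_per f l q h.per] at h2
    exact h2
  have hv2 : v = (v.1, 0) := Prod.ext rfl h0
  obtain ⟨r, hr, hF⟩ := flat_core h hεα hs hN hplane hw k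
    (a := v.1) (LocChart.mem_box.1 (show (v.1, v.2) ∈ ball 0 ρ from hv)).1
    (by rw [← hv2, hvw]) (by rw [← hv2, hvw]; exact hk)
  exact ⟨_, _, _, hF⟩

lemma flat_q (h : LocChart f q l φ ρ) (hexp : IsExpansive f α) (hεα : ε ≤ α)
    (hs : SpSet f x ν q ⊆ WsLoc f ε q) (hq : q ∈ ball x ν) :
    ∃ r > 0, ∃ O H₁ H₂, FlatAt (ball x ν) (SpSet f x ν q) q O H₁ H₂ ∧
      ∀ s ∈ Ioo (0 : ℝ) r, φ (0, s) ∈ H₁ ∧ φ (0, -s) ∈ H₂ := by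
  obtain ⟨N, hN, hqN, hNφ, hplane⟩ := h.plane_nhd α hexp
  have e0 : φ (0, 0) = q := h.zero
  obtain ⟨r, hr, hF⟩ := flat_core h hεα hs hN hplane (Sp_self hq) 0
    (a := 0) (by simpa using h.hρ) (by simp [iterZ_zero, e0]) (by rw [e0]; exact hqN)
  refine ⟨r, hr, _, _, _, hF, fun s hs => ⟨⟨(0, s), ⟨mem_ball_self hr, hs⟩, by simp [iterZ_zero]⟩,
    ⟨(0, -s), ⟨mem_ball_self hr, ?_⟩, by simp [iterZ_zero]⟩⟩⟩
  exact ⟨by linarith [hs.2], by linarith [hs.1]⟩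

lemma branch (h : LocChart f q l φ ρ) (hexp : IsExpansive f α) (hεα : ε ≤ α)
    (hs : SpSet f x ν q ⊆ WsLoc f ε q) (hu : UpSet f x ν q ⊆ WuLoc f ε q)
    {z : X} {η : ℝ} (hqz : q ∈ ball z η) (hzη : closedBall z η ⊆ ball x ν)
    (σ : ℝ) (hσ : |σ| = 1) :
    ∃ Y : Set X, IsPreconnected Y ∧ Y ⊆ UpSet f x ν q ∩ closedBall z η ∧ q ∈ Y ∧
      ∃ a ∈ Y, η ≤ dist a z ∧ ∃ D : Set X, IsPreconnected D ∧ a ∈ D ∧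
        D ⊆ ball x ν \ SpSet f x ν q ∧ ∀ τ > 0, ∃ s ∈ Ioo (0 : ℝ) τ, φ (0, σ * s) ∈ D := by
  have hρ := h.hρ
  set b := ρ / 2 with hb
  have hb0 : 0 < b := by positivity
  have hbρ : b < ρ := by linarith
  have habs : ∀ s ∈ Icc 0 b, |σ * s| < ρ := by
    intro s hs; rw [abs_mul, hσ, one_mul, abs_of_nonneg hs.1]; linarith [hs.2]
  let g : ℕ → ℝ → X := fun k s => iterZ f ((l : ℤ) * k) (φ (0, σ * s))
  have hgc : ∀ k, ContinuousOn (g k) (Icc 0 b) := by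
    intro k
    refine (iterZ_cont f _).comp_continuousOn (h.cont.comp (by fun_prop) ?_)
    intro s hs
    exact LocChart.mem_box.2 ⟨by simpa using hρ, habs s hs⟩
  have hg0 : ∀ k, g k 0 = q := by
    intro k
    have e0 : φ (0, 0) = q := h.zero
    simp only [g, mul_zero, e0, iterZ_per f l q h.per]
  have hgWu : ∀ k, ∀ s ∈ Icc 0 b, g k s ∈ Wu f q := by
    intro k s hs
    have := Wu_shift f ((l : ℤ) * k) (h.axis_Wu (habs s hs))
    rwa [iterZ_per f l q h.per] at this
  have hball : closedBall z η ⊆ ball x ν := hzη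
  -- a subinterval image inside the ball lies in `U_q`
  have hin : ∀ k, ∀ c ∈ Icc 0 b, (∀ s ∈ Icc 0 c, g k s ∈ closedBall z η) →
      g k '' Icc 0 c ⊆ UpSet f x ν q := by
    intro k c hc hcs
    refine IsPreconnected.subset_connectedComponentIn
      (isPreconnected_Icc.image _ ((hgc k).mono (Icc_subset_Icc le_rfl hc.2)))
      ⟨0, ⟨le_rfl, hc.1⟩, hg0 k⟩ ?_
    rintro _ ⟨s, hs, rfl⟩
    exact ⟨hgWu k s ⟨hs.1, hs.2.trans hc.2⟩, hball (hcs s hs)⟩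
  have hexit : ∃ k, ∃ s ∈ Icc 0 b, η ≤ dist (g k s) z := by
    by_contra! hcon
    have hbI : b ∈ Icc 0 b := ⟨hb0.le, le_rfl⟩
    have hall : ∀ k, g k b ∈ WuLoc f ε q := fun k =>
      hu (hin k b hbI (fun s hs => mem_closedBall.2 (hcon k s hs).le) ⟨b, hbI, rfl⟩)
    have hne : q ≠ φ (0, σ * b) := by
      intro he
      rw [← h.zero] at he
      have h1 := h.inj h.zero_mem (LocChart.mem_box.2 ⟨by simpa using hρ, habs b hbI⟩) he
      have h2 : (0 : ℝ) = σ * b := congrArg Prod.snd h1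
      have h3 : |σ * b| = b := by rw [abs_mul, hσ, one_mul, abs_of_pos hb0]
      rw [← h2] at h3
      simp at h3; linarith
    obtain ⟨m, hm⟩ := hexp _ _ hne
    have hl := h.hl
    have hml : m ≤ (l : ℤ) * m.toNat := by
      have h1 : m ≤ m.toNat := Int.self_le_toNat m
      have h2 : m.toNat ≤ l * m.toNat := Nat.le_mul_of_pos_left _ hl
      have h3 : (m.toNat : ℤ) ≤ (l : ℤ) * m.toNat := by exact_mod_cast h2
      linarith
    have h4 := hall m.toNat (m - (l : ℤ) * m.toNat) (by linarith)
    have h5 : iterZ f (m - (l : ℤ) * m.toNat) q = iterZ f m q := by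
      rw [sub_eq_add_neg, iterZ_add, iterZ_per_neg f l q h.per]
    have h6 : iterZ f (m - (l : ℤ) * m.toNat) (g m.toNat b) = iterZ f m (φ (0, σ * b)) := by
      simp only [g]
      rw [← iterZ_add]; congr 1; ring
    rw [h5, h6] at h4
    linarith
  obtain ⟨k, s₀, hs₀, hs₀η⟩ := hexit
  have hdc : ContinuousOn (fun s => dist (g k s) z) (Icc 0 b) := fun s hs => Filter.Tendsto.dist (hgc k s hs) tendsto_const_nhds
  have hcomp : IsCompact {s | s ∈ Icc 0 b ∧ η ≤ dist (g k s) z} := by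
    have : IsClosed (Icc 0 b ∩ (fun s => dist (g k s) z) ⁻¹' Ici η) :=
      hdc.preimage_isClosed_of_isClosed isClosed_Icc isClosed_Ici
    exact isCompact_Icc.of_isClosed_subset this inter_subset_left
  obtain ⟨c, ⟨hc, hcη⟩, hcmin⟩ := hcomp.exists_isLeast ⟨s₀, hs₀, hs₀η⟩
  have hc0 : 0 < c := by
    rcases hc.1.lt_or_eq with h0 | h0
    · exact h0
    · rw [← h0, hg0] at hcη
      exact absurd hcη (not_le.2 hqz)
  have hlt : ∀ s ∈ Ico 0 c, dist (g k s) z < η := by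
    intro s hs
    by_contra! hcon
    exact absurd (hcmin ⟨⟨hs.1, hs.2.le.trans hc.2⟩, hcon⟩) (not_le.2 hs.2)
  have hle : ∀ s ∈ Icc 0 c, g k s ∈ closedBall z η := by
    have hcl : closure (Ico 0 c) = Icc 0 c := closure_Ico hc0.ne
    intro s hs
    have hm : MapsTo (g k) (Ico 0 c) (closedBall z η) := fun s hs => (hlt s hs).le
    have hcts : ContinuousOn (g k) (closure (Ico 0 c)) := by
      rw [hcl]; exact (hgc k).mono (Icc_subset_Icc le_rfl hc.2)
    have := hm.closure_of_continuousOn hcts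
    rw [hcl, isClosed_closedBall.closure_eq] at this
    exact this hs
  have hU := hin k c hc hle
  refine ⟨g k '' Icc 0 c, isPreconnected_Icc.image _ ((hgc k).mono (Icc_subset_Icc le_rfl hc.2)),
    ?_, ⟨0, ⟨le_rfl, hc.1⟩, hg0 k⟩, g k c, ⟨c, ⟨hc.1, le_rfl⟩, rfl⟩, hcη, g k '' Ioc 0 c,
    isPreconnected_Ioc.image _ ((hgc k).mono ?_), ⟨c, ⟨hc0, le_rfl⟩, rfl⟩, ?_, ?_⟩
  · refine subset_inter hU ?_
    rintro _ ⟨s, hs, rfl⟩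
    exact hle s hs
  · exact fun s hs => ⟨hs.1.le, hs.2.trans hc.2⟩
  · rintro _ ⟨s, hs', rfl⟩
    refine ⟨hball (hle s ⟨hs'.1.le, hs'.2⟩), fun hS => ?_⟩
    have he := loc_inter f α ε hεα hexp (hs hS) (hu (hU ⟨s, ⟨hs'.1.le, hs'.2⟩, rfl⟩))
    have hsb : s ∈ Icc 0 b := ⟨hs'.1.le, hs'.2.trans hc.2⟩
    have he2 : φ (0, σ * s) = φ 0 := by
      have h1 := congrArg (iterZ f (-((l : ℤ) * k))) he
      rw [iterZ_per_neg f l q h.per] at h1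
      simp only [g, iterZ_neg_cancel] at h1
      rw [h1, h.zero]
    have h1 := h.inj (LocChart.mem_box.2 ⟨by simpa using hρ, habs s hsb⟩) h.zero_mem he2
    have h2 : σ * s = 0 := congrArg Prod.snd h1
    have h3 : |σ * s| = s := by rw [abs_mul, hσ, one_mul, abs_of_pos hs'.1]
    rw [h2] at h3
    simp at h3; linarith [hs'.1]
  · intro τ hτ
    have hp : (0 : ℝ) < 2 ^ k := by positivity
    obtain ⟨s, hs0, hs1⟩ := exists_between (show 0 < min τ (min b (2 ^ k * c)) by positivity)
    obtain ⟨hsτ, hs2⟩ := lt_min_iff.1 hs1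
    obtain ⟨hsb, hsc⟩ := lt_min_iff.1 hs2
    refine ⟨s, ⟨hs0, hsτ⟩, s / 2 ^ k, ⟨by positivity, ?_⟩, ?_⟩
    · rw [div_le_iff₀ hp]; linarith
    · have e : (2 : ℝ) ^ k * (σ * (s / 2 ^ k)) = σ * s := by field_simp
      have := h.bwd (k := k) (t := σ * (s / 2 ^ k)) (by rw [e]; exact habs s ⟨hs0.le, hsb.le⟩)
      rw [e] at this
      exact this

end Local

lemma sides [CompactSpace X] [LocallyConnectedSpace X] {f : X ≃ₜ X} {α ε ν : ℝ} {x q : X}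
    {n : ℕ} (hn : 1 ≤ n) (hexp : IsExpansive f α) (hεα : ε ≤ α)
    (hq : q ∈ PerHr f n (n - 1)) (hqB : q ∈ ball x ν)
    (hs : SpSet f x ν q ⊆ WsLoc f ε q) (hu : UpSet f x ν q ⊆ WuLoc f ε q)
    (hB : IsPreconnected (ball x ν)) (hx : x ∈ ball x ν \ SpSet f x ν q)
    (htwo : ∃ V₁ V₂ : Set X, TwoComponents (ball x ν \ SpSet f x ν q) V₁ V₂)
    {z : X} {η : ℝ} (hqz : q ∈ ball z η) (hzη : closedBall z η ⊆ ball x ν) :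
    (∃ Y : Set X, IsPreconnected Y ∧ Y ⊆ UpSet f x ν q ∩ closedBall z η ∧ q ∈ Y ∧
      ∃ a ∈ Y, η ≤ dist a z ∧ a ∉ ShatSet f x ν q) ∧
    (∃ Y : Set X, IsPreconnected Y ∧ Y ⊆ UpSet f x ν q ∩ closedBall z η ∧ q ∈ Y ∧
      ∃ a ∈ Y, η ≤ dist a z ∧ a ∈ ShatSet f x ν q) := by
  obtain ⟨l, φ, ρ, h⟩ := exists_chart f n hn q hq
  obtain ⟨r, hr, O, H₁, H₂, hF, hH⟩ := flat_q h hexp hεα hs hqB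
  have hop := Sp_open hexp hεα hs
  obtain ⟨y, hy, hxy⟩ : ∃ y ∈ ball x ν \ SpSet f x ν q,
      connectedComponentIn (ball x ν \ SpSet f x ν q) x ≠
        connectedComponentIn (ball x ν \ SpSet f x ν q) y := by
    obtain ⟨V₁, V₂, hne, -, ⟨y₁, hy₁, e₁⟩, ⟨y₂, hy₂, e₂⟩⟩ := htwo
    by_cases hc : connectedComponentIn (ball x ν \ SpSet f x ν q) x = V₁
    · exact ⟨y₂, hy₂, by rw [hc, e₂]; exact hne⟩
    · exact ⟨y₁, hy₁, by rw [e₁]; exact hc⟩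
  have hts := two_sides hB Sp_sub_ball isPreconnected_connectedComponentIn hop
    (fun w hw => flat_all h hexp hεα hs hw) hx hy hxy (Sp_self hqB) hF
  obtain ⟨Y₁, hY₁, hY₁s, hqY₁, a₁, ha₁, ha₁η, D₁, hD₁, haD₁, hD₁s, hτ₁⟩ :=
    branch h hexp hεα hs hu hqz hzη 1 (by simp)
  obtain ⟨Y₂, hY₂, hY₂s, hqY₂, a₂, ha₂, ha₂η, D₂, hD₂, haD₂, hD₂s, hτ₂⟩ :=
    branch h hexp hεα hs hu hqz hzη (-1) (by simp)
  obtain ⟨s₁, hs₁, hsD₁⟩ := hτ₁ r hr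
  obtain ⟨s₂, hs₂, hsD₂⟩ := hτ₂ r hr
  rw [one_mul] at hsD₁
  rw [neg_one_mul] at hsD₂
  have m₁ := (hH s₁ hs₁).1
  have m₂ := (hH s₂ hs₂).2
  have out : ∀ {D : Set X} {a b : X}, IsPreconnected D → D ⊆ ball x ν \ SpSet f x ν q →
      a ∈ D → b ∈ D → b ∈ connectedComponentIn (ball x ν \ SpSet f x ν q) x →
      a ∉ ShatSet f x ν q := fun hD hDs ha hb hbx hcon => hcon.2 (sub_comp hD hDs hb hbx ha)
  have inn : ∀ {D : Set X} {a b : X}, IsPreconnected D → D ⊆ ball x ν \ SpSet f x ν q →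
      a ∈ D → b ∈ D → b ∉ connectedComponentIn (ball x ν \ SpSet f x ν q) x →
      a ∈ ShatSet f x ν q := fun hD hDs ha hb hbx =>
        ⟨(hDs ha).1, fun hcon => hbx (sub_comp hD hDs ha hcon hb)⟩
  rcases hts with ⟨k1, k2⟩ | ⟨k1, k2⟩
  · exact ⟨⟨Y₁, hY₁, hY₁s, hqY₁, a₁, ha₁, ha₁η, out hD₁ hD₁s haD₁ hsD₁ (k1 m₁)⟩,
      ⟨Y₂, hY₂, hY₂s, hqY₂, a₂, ha₂, ha₂η, inn hD₂ hD₂s haD₂ hsD₂ (Set.disjoint_left.1 k2 m₂)⟩⟩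
  · exact ⟨⟨Y₂, hY₂, hY₂s, hqY₂, a₂, ha₂, ha₂η, out hD₂ hD₂s haD₂ hsD₂ (k1 m₂)⟩,
      ⟨Y₁, hY₁, hY₁s, hqY₁, a₁, ha₁, ha₁η, inn hD₁ hD₁s haD₁ hsD₁ (Set.disjoint_left.1 k2 m₁)⟩⟩

/-- A connected set in the ball joining `Ŝ_r` to its complement meets `S_r`. -/
lemma meets_Sp {f : X ≃ₜ X} {ν : ℝ} {x r : X} {Y : Set X} (hY : IsPreconnected Y)
    (hYB : Y ⊆ ball x ν) {a b : X} (ha : a ∈ Y) (hb : b ∈ Y) (haS : a ∈ ShatSet f x ν r)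
    (hbS : b ∉ ShatSet f x ν r) : (Y ∩ SpSet f x ν r).Nonempty := by
  by_contra hem
  have hsub : Y ⊆ ball x ν \ SpSet f x ν r := fun y hy => ⟨hYB hy, fun h => hem ⟨y, hy, h⟩⟩
  have hbx : b ∈ connectedComponentIn (ball x ν \ SpSet f x ν r) x := by
    by_contra hcon
    exact hbS ⟨hYB hb, hcon⟩
  exact haS.2 (sub_comp hY hsub hb hbx ha)

lemma Sp_sub_Shat [CompactSpace X] {f : X ≃ₜ X} {ν : ℝ} {x r : X} : SpSet f x ν r ⊆ ShatSet f x ν r :=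
  fun _ hy => ⟨Sp_sub_ball hy, fun h => (connectedComponentIn_subset _ _ h).2 hy⟩

lemma meets_frontier {S Y : Set X} (hY : IsPreconnected Y) {a b : X} (ha : a ∈ Y) (hb : b ∈ Y)
    (haS : a ∈ S) (hbS : b ∉ S) : (Y ∩ frontier S).Nonempty := by
  by_contra hem
  have h1 : ∀ y ∈ Y, y ∉ frontier S := fun y hy h => hem ⟨y, hy, h⟩
  have hcov : Y ⊆ interior S ∪ (closure S)ᶜ := by
    intro y hy
    by_cases hc : y ∈ closure S
    · left
      by_contra hi
      exact h1 y hy ⟨hc, hi⟩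
    · exact Or.inr hc
  have hiS : a ∈ interior S := by
    rcases hcov ha with h | h
    · exact h
    · exact absurd (subset_closure haS) h
  rcases isPreconnected_iff_subset_of_disjoint.1 hY _ _ isOpen_interior
    isClosed_closure.isOpen_compl hcov (by
      rw [eq_empty_iff_forall_notMem]
      rintro y ⟨-, h, h'⟩
      exact h' (subset_closure (interior_subset h))) with h | h
  · exact hbS (interior_subset (h hb))
  · exact h ha (subset_closure haS)

lemma perHr_zero [ConnectedSpace X] {f : X ≃ₜ X} {q : X} (hq : q ∈ PerHr f 0 0) (x : X) :
    x = q := by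
  obtain ⟨l, hl, hper, U, V, h, hU, hV, h0, hp, hhp, hdyn⟩ := hq
  have hUq : U = {q} := by
    ext y
    refine ⟨fun hy => ?_, fun hy => by rw [mem_singleton_iff.1 hy]; exact hp⟩
    have : (⟨y, hy⟩ : U) = ⟨q, hp⟩ := h.injective (Subtype.ext (by
      refine Prod.ext ?_ ?_ <;> funext i <;> exact absurd i.2 (by simp)))
    exact congrArg Subtype.val this
  have hclop : IsClopen U := ⟨by rw [hUq]; exact isClosed_singleton, hU⟩
  have huniv := hclop.eq_univ ⟨q, hp⟩
  have : x ∈ U := by rw [huniv]; trivial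
  rw [hUq] at this
  exact this

end Helpers

/-- **Lemma (intersections near the frontier).** -/
theorem stmt16
    {M : Type*} [MetricSpace M] [CompactSpace M] [ConnectedSpace M]
    (n : ℕ) [ChartedSpace (EuclideanSpace ℝ (Fin n)) M]
    (f : M ≃ₜ M) (α : ℝ) (hα : 0 < α) (hexp : IsExpansive f α)
    (x : M) (hx : ¬ AdmitsLPS f n x)
    (ε : ℝ) (hε : 0 < ε) (hεα : 2 * ε < α) (ν : ℝ) (hν : 0 < ν)
    (hi : ∀ p ∈ PerH f n ∩ Metric.ball x ν,
      SpSet f x ν p ⊆ WsLoc f ε p ∧ UpSet f x ν p ⊆ WuLoc f ε p)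
    (hii : ∀ p ∈ PerHr f n (n - 1) ∩ Metric.ball x ν,
      ∃ V₁ V₂ : Set M, TwoComponents (Metric.ball x ν \ SpSet f x ν p) V₁ V₂)
    (hdense : closure (PerH f n) = Set.univ)
    (δ : ℝ) (hδ : δ ∈ Set.Ioo (0 : ℝ) ν)
    (hfin : {C : Set M | IsMaxChainIn f n x ν δ C}.Finite)
    (hdisj : ∀ C₁ C₂ : Set M, IsMaxChainIn f n x ν δ C₁ → IsMaxChainIn f n x ν δ C₂ →
      C₁ ≠ C₂ → Disjoint C₁ C₂)
    (hacc : ∀ C : Set M, IsMaxChainIn f n x ν δ C → x ∈ closure C)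
    :
    ∀ p ∈ Xdelta f n x δ, ∀ C : Set M, IsMaxChainIn f n x ν δ C → p ∈ C →
      ∀ z ∈ frontier (closure (⋃ q ∈ C, ShatSet f x ν q)) ∩ Metric.ball x δ,
        ∀ ε' : ℝ, 0 < ε' →
          ∃ V : Set M, IsOpen V ∧ z ∈ V ∧
            ∀ q ∈ V ∩ C, ∀ r ∈ V ∩ C,
              (UpSet f x ν q ∩ SpSet f x ν r ∩ Metric.ball z ε' ∩
                closure (⋃ q' ∈ C, ShatSet f x ν q')).Nonempty ∧
              (UpSet f x ν q ∩
                frontier (closure (⋃ q' ∈ C, ShatSet f x ν q')) ∩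
                Metric.ball z ε').Nonempty := by
  intro p hp C hC hpC z hz ε' hε'
  haveI : LocallyConnectedSpace M := ChartedSpace.locallyConnectedSpace (EuclideanSpace ℝ (Fin n)) M
  have hεα' : ε ≤ α := by linarith
  set B := Metric.ball x ν with hBdef
  set SC := closure (⋃ q ∈ C, ShatSet f x ν q) with hSC
  have hδν : Metric.ball x δ ⊆ B := Metric.ball_subset_ball hδ.2.le
  have hxB : x ∈ B := Metric.mem_ball_self hν
  have hzB : z ∈ B := hδν hz.2
  have hCper : ∀ q ∈ C, q ∈ PerHr f n (n - 1) := fun q hq => (hC.1.1 hq).1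
  have hCB : ∀ q ∈ C, q ∈ B := fun q hq => hδν (hC.1.1 hq).2
  have hPH : ∀ q ∈ C, q ∈ PerH f n ∩ Metric.ball x ν := fun q hq =>
    ⟨mem_iUnion₂.2 ⟨n - 1, Finset.mem_range.2 (by omega), hCper q hq⟩, hCB q hq⟩
  have hsS : ∀ q ∈ C, SpSet f x ν q ⊆ WsLoc f ε q := fun q hq => (hi q (hPH q hq)).1
  have huU : ∀ q ∈ C, UpSet f x ν q ⊆ WuLoc f ε q := fun q hq => (hi q (hPH q hq)).2
  have htot := hC.1.2
  have hself : ∀ q ∈ C, q ∈ SpSet f x ν q := fun q hq => Sp_self (hCB q hq)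
  have hShatSC : ∀ q ∈ C, ShatSet f x ν q ⊆ SC := fun q hq =>
    (subset_biUnion_of_mem (u := fun q => ShatSet f x ν q) hq).trans subset_closure
  -- `x` lies on no `S_t`
  have hxS : ∀ t ∈ C, x ∉ SpSet f x ν t := by
    intro t ht hxt
    have hBS : B ⊆ SC := by
      refine Subset.trans ?_ (hShatSC t ht)
      intro y hy
      refine ⟨hy, fun h => ?_⟩
      have : x ∈ Metric.ball x ν \ SpSet f x ν t := by
        by_contra hcon
        rw [connectedComponentIn_eq_empty hcon] at h
        exact h
      exact this.2 hxt
    exact hz.1.2 (mem_interior.2 ⟨B, hBS, Metric.isOpen_ball, hzB⟩)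
  -- dimension
  have hn : 1 ≤ n := by
    by_contra hn0
    have hn0' : n = 0 := by omega
    subst hn0'
    have := perHr_zero (hCper p hpC) x
    exact hxS p hpC (by rw [this]; rw [this] at hself; exact hself p hpC)
  have hxBS : ∀ t ∈ C, x ∈ Metric.ball x ν \ SpSet f x ν t := fun t ht => ⟨hxB, hxS t ht⟩
  have hopB : ∀ t ∈ C, IsOpen (Metric.ball x ν \ SpSet f x ν t) := fun t ht =>
    Sp_open hexp hεα' (hsS t ht)
  have hopc : ∀ t ∈ C, IsOpen (connectedComponentIn (Metric.ball x ν \ SpSet f x ν t) x) :=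
    fun t ht => (hopB t ht).connectedComponentIn
  have hnotShat : ∀ t y, y ∈ B → y ∉ ShatSet f x ν t →
      y ∈ connectedComponentIn (Metric.ball x ν \ SpSet f x ν t) x := by
    intro t y hy hyS
    by_contra hcon
    exact hyS ⟨hy, hcon⟩
  -- points of `C` close to a point off `Ŝ_t` dominate `t`
  have hdom : ∀ t ∈ C, ∀ y ∈ B, y ∉ ShatSet f x ν t →
      ∀ᶠ q in nhds y, q ∈ C → ShatSet f x ν t ⊆ ShatSet f x ν q := by
    intro t ht y hy hyS
    filter_upwards [(hopc t ht).mem_nhds (hnotShat t y hy hyS)] with q hq hqC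
    rcases htot t ht q hqC with h | h
    · exact h
    · exact absurd (h (Sp_sub_Shat (hself q hqC))) (fun h' => h'.2 hq)
  have hxShat : ∀ t ∈ C, x ∉ ShatSet f x ν t := fun t ht h =>
    h.2 (mem_connectedComponentIn (hxBS t ht))
  have hxC : x ∈ closure C := hacc C hC
  -- a strictly larger element
  have hbig : ∀ t ∈ C, ∀ A ∈ nhds x, ∃ q ∈ C, q ∈ A ∧ ShatSet f x ν t ⊆ ShatSet f x ν q ∧
      Disjoint (SpSet f x ν t) (SpSet f x ν q) := by
    intro t ht A hA
    have h1 := hdom t ht x hxB (hxShat t ht)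
    have h2 : ∀ᶠ q in nhds x, q ∉ ShatSet f x ν t := by
      filter_upwards [(hopc t ht).mem_nhds (mem_connectedComponentIn (hxBS t ht))] with q hq h
      exact h.2 hq
    obtain ⟨q, ⟨⟨hq1, hq2⟩, hq3⟩, hqC⟩ :=
      mem_closure_iff_nhds.1 hxC _ (Filter.inter_mem (Filter.inter_mem h1 h2) hA)
    refine ⟨q, hqC, hq3, hq1 hqC, ?_⟩
    rw [Set.disjoint_left]
    intro w hwt hwq
    have he := Sp_eq hwt hwq
    exact hq2 (Sp_sub_Shat (by rw [he]; exact hself q hqC))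
  -- the ball is connected
  have hBconn : IsPreconnected B := by
    set A := connectedComponentIn B x with hA
    have hAo : IsOpen A := Metric.isOpen_ball.connectedComponentIn
    have hxA : x ∈ A := mem_connectedComponentIn hxB
    have hApc : IsPreconnected A := isPreconnected_connectedComponentIn
    by_cases hBA : B ⊆ A
    · have : B = A := subset_antisymm hBA (connectedComponentIn_subset _ _)
      rw [this]; exact hApc
    exfalso
    obtain ⟨y, hyB, hyA⟩ := not_subset.1 hBA
    have hSA : ∀ q ∈ C, q ∈ A → SpSet f x ν q ⊆ A := fun q hq hqA =>
      sub_comp isPreconnected_connectedComponentIn Sp_sub_ball (hself q hq) hqA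
    have hAS : ∀ q ∈ C, q ∈ A → ∀ w ∈ A, w ∈ ShatSet f x ν q → w ∈ SpSet f x ν q := by
      intro q hq hqA w hwA hwS
      by_contra hwn
      have hwB : w ∈ B := hwS.1
      have hw : w ∈ Metric.ball x ν \ SpSet f x ν q := ⟨hwB, hwn⟩
      have hy : y ∈ Metric.ball x ν \ SpSet f x ν q := ⟨hyB, fun h => hyA (hSA q hq hqA h)⟩
      have hwx : connectedComponentIn (Metric.ball x ν \ SpSet f x ν q) w ≠
          connectedComponentIn (Metric.ball x ν \ SpSet f x ν q) x := by
        intro he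
        exact hwS.2 (by rw [← he]; exact mem_connectedComponentIn hw)
      have hnoty : ∀ u ∈ A, y ∉ connectedComponentIn (Metric.ball x ν \ SpSet f x ν q) u := by
        intro u hu hyu
        have huB : u ∈ Metric.ball x ν \ SpSet f x ν q := by
          by_contra hcon
          rw [connectedComponentIn_eq_empty hcon] at hyu
          exact hyu
        exact hyA (sub_comp isPreconnected_connectedComponentIn
          ((connectedComponentIn_subset _ _).trans diff_subset) (mem_connectedComponentIn huB)
          hu hyu)
      have hyw : connectedComponentIn (Metric.ball x ν \ SpSet f x ν q) y ≠
          connectedComponentIn (Metric.ball x ν \ SpSet f x ν q) w := by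
        intro he
        exact hnoty w hwA (by rw [← he]; exact mem_connectedComponentIn hy)
      have hyx : connectedComponentIn (Metric.ball x ν \ SpSet f x ν q) y ≠
          connectedComponentIn (Metric.ball x ν \ SpSet f x ν q) x := by
        intro he
        exact hnoty x hxA (by rw [← he]; exact mem_connectedComponentIn hy)
      obtain ⟨V₁, V₂, -, hall, -, -⟩ := hii q ⟨hCper q hq, hCB q hq⟩
      rcases hall w hw with h1 | h1 <;> rcases hall y hy with h2 | h2 <;>
        rcases hall x (hxBS q hq) with h3 | h3 <;> simp_all
    obtain ⟨t, htC, htA, -, -⟩ := hbig p hpC A (hAo.mem_nhds hxA)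
    obtain ⟨q, hqC, hqA, htq, hd⟩ := hbig t htC A (hAo.mem_nhds hxA)
    exact Set.disjoint_left.1 hd (hself t htC)
      (hAS q hqC hqA t htA (htq (Sp_sub_Shat (hself t htC))))
  -- interior of `Ŝ_t`
  have hint : ∀ t ∈ C, ∀ w ∈ ShatSet f x ν t, w ∉ SpSet f x ν t →
      ShatSet f x ν t ∈ nhds w := by
    intro t ht w hw hwS
    have hwm : w ∈ Metric.ball x ν \ SpSet f x ν t := ⟨hw.1, hwS⟩
    filter_upwards [(hopB t ht).connectedComponentIn.mem_nhds (mem_connectedComponentIn hwm)]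
      with u hu
    refine ⟨(connectedComponentIn_subset _ _ hu).1, fun hux => hw.2 ?_⟩
    rw [comp_disjoint hux hu]
    exact mem_connectedComponentIn hwm
  -- `z` lies in no `Ŝ_t`
  have hzShat : ∀ t ∈ C, z ∉ ShatSet f x ν t := by
    intro t ht hzt
    have hzin : ∃ t' ∈ C, z ∈ ShatSet f x ν t' ∧ z ∉ SpSet f x ν t' := by
      by_cases hzS : z ∈ SpSet f x ν t
      · obtain ⟨q, hqC, -, htq, hd⟩ := hbig t ht univ Filter.univ_mem
        exact ⟨q, hqC, htq hzt, Set.disjoint_left.1 hd hzS⟩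
      · exact ⟨t, ht, hzt, hzS⟩
    obtain ⟨t', ht', h1, h2⟩ := hzin
    exact hz.1.2 (mem_interior_iff_mem_nhds.2
      (Filter.mem_of_superset (hint t' ht' z h1 h2) (hShatSC t' ht')))
  have hdomz : ∀ t ∈ C, ∀ᶠ q in nhds z, q ∈ C → ShatSet f x ν t ⊆ ShatSet f x ν q :=
    fun t ht => hdom t ht z hzB (hzShat t ht)
  -- key fact
  have key : ∀ (Q : ℕ → M), (∀ k, Q k ∈ C) → Filter.Tendsto Q Filter.atTop (nhds z) →
      ∀ w ∈ SC, w ∈ B → w ∉ WsLoc f ε z → ∃ t ∈ C, ShatSet f x ν t ∈ nhds w := by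
    intro Q hQC hQ w hwSC hwB hwW
    by_contra! hcon
    apply hwW
    have hmeet : ∀ e > 0, ∀ᶠ k in Filter.atTop, (Metric.ball w e ∩ SpSet f x ν (Q k)).Nonempty := by
      intro e he
      have hoe : IsOpen (Metric.ball w e ∩ B) := Metric.isOpen_ball.inter Metric.isOpen_ball
      have hwe : w ∈ Metric.ball w e ∩ B := ⟨Metric.mem_ball_self he, hwB⟩
      set N := connectedComponentIn (Metric.ball w e ∩ B) w with hN
      have hNo : IsOpen N := hoe.connectedComponentIn
      have hwN : w ∈ N := mem_connectedComponentIn hwe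
      have hNs : N ⊆ Metric.ball w e ∩ B := connectedComponentIn_subset _ _
      obtain ⟨u, huN, hu⟩ := mem_closure_iff.1 hwSC N hNo hwN
      obtain ⟨t, ht, hut⟩ := mem_iUnion₂.1 hu
      filter_upwards [hQ.eventually (hdomz t ht)] with k hk
      have huk := hk (hQC k) hut
      have hnsub : ¬ N ⊆ ShatSet f x ν (Q k) := fun h =>
        hcon (Q k) (hQC k) (Filter.mem_of_superset (hNo.mem_nhds hwN) h)
      obtain ⟨v, hvN, hv⟩ := not_subset.1 hnsub
      obtain ⟨s, hsN, hs⟩ := meets_Sp (isPreconnected_connectedComponentIn)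
        (hNs.trans inter_subset_right) huN hvN huk hv
      exact ⟨s, (hNs hsN).1, hs⟩
    intro k hk
    by_contra! hlt
    -- closeness contradiction
    have hc1 : Filter.Tendsto (fun r : M × M => dist (iterZ f k r.1) (iterZ f k r.2))
        (nhds z ×ˢ nhds w) (nhds (dist (iterZ f k z) (iterZ f k w))) := by
      rw [← nhds_prod_eq]
      exact (((iterZ_cont f k).comp continuous_fst).dist
        ((iterZ_cont f k).comp continuous_snd)).tendsto (z, w)
    have hev := hc1.eventually (lt_mem_nhds hlt)
    obtain ⟨P₁, hP₁, P₂, hP₂, hPP⟩ := Filter.eventually_prod_iff.1 hev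
    obtain ⟨e, he, hball⟩ := Metric.mem_nhds_iff.1 hP₂
    obtain ⟨m, hm1, s, hs1, hs2⟩ := ((hQ.eventually hP₁).and (hmeet e he)).exists
    have h1 := hPP hm1 (hball hs1)
    have h2 := hsS (Q m) (hQC m) hs2 k hk
    exact absurd h1 (not_lt.2 h2)
  -- choice of radius
  obtain ⟨η₀, hη₀, hη₀B⟩ := Metric.isOpen_iff.1 Metric.isOpen_ball z hzB
  obtain ⟨η, hη, hηlt⟩ := exists_between (show 0 < min η₀ ε' by positivity)
  obtain ⟨hηη₀, hηε'⟩ := lt_min_iff.1 hηlt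
  have hzη : Metric.closedBall z η ⊆ Metric.ball x ν :=
    (Metric.closedBall_subset_ball hηη₀).trans hη₀B
  have hzε' : Metric.closedBall z η ⊆ Metric.ball z ε' := Metric.closedBall_subset_ball hηε'
  -- a limit lemma
  have hlim : ∀ (Q a : ℕ → M), (∀ k, Q k ∈ C) → Filter.Tendsto Q Filter.atTop (nhds z) →
      (∀ k, a k ∈ UpSet f x ν (Q k) ∩ Metric.closedBall z η) → (∀ k, η ≤ dist (a k) z) →
      (∀ k, a k ∈ SC) → ∃ ψ : ℕ → ℕ, StrictMono ψ ∧ ∃ t ∈ C,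
        ∀ᶠ k in Filter.atTop, a (ψ k) ∈ ShatSet f x ν t := by
    intro Q a hQC hQ haU haη haSC
    obtain ⟨b, -, ψ, hψ, hb⟩ := isCompact_univ.tendsto_subseq (x := a) (fun n => mem_univ _)
    have hbSC : b ∈ SC := isClosed_closure.mem_of_tendsto hb
      (Filter.Eventually.of_forall fun k => haSC _)
    have hbB : b ∈ B := hzη (Metric.isClosed_closedBall.mem_of_tendsto hb
      (Filter.Eventually.of_forall fun k => (haU _).2))
    have hbη : η ≤ dist b z := ge_of_tendsto' (hb.dist tendsto_const_nhds) (fun k => haη _)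
    have hbu : b ∈ WuLoc f ε z := WuLoc_limit f ε (hQ.comp hψ.tendsto_atTop) hb
      (Filter.Eventually.of_forall fun k => huU _ (hQC _) (haU _).1)
    have hbs : b ∉ WsLoc f ε z := by
      intro hbs
      have := loc_inter f α ε hεα' hexp hbs hbu
      rw [this, dist_self] at hbη
      linarith
    obtain ⟨t, ht, htb⟩ := key Q hQC hQ b hbSC hbB hbs
    exact ⟨ψ, hψ, t, ht, hb.eventually htb⟩
  have hsides : ∀ q ∈ C, q ∈ Metric.ball z η → _ := fun q hq hqz =>
    sides hn hexp hεα' (hCper q hq) (hCB q hq) (hsS q hq) (huU q hq) hBconn (hxBS q hq)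
      (hii q ⟨hCper q hq, hCB q hq⟩) hqz hzη
  -- outer branch leaves `SC`
  have houter : ∀ᶠ q in nhds z, q ∈ C → ∃ Y : Set M, IsPreconnected Y ∧
      Y ⊆ UpSet f x ν q ∩ Metric.closedBall z η ∧ q ∈ Y ∧ ∃ a ∈ Y, a ∉ SC := by
    by_contra hcon
    rw [Filter.not_eventually] at hcon
    obtain ⟨Q, hQ, hQP⟩ := Filter.exists_seq_forall_of_frequently
      (hcon.and_eventually (Metric.ball_mem_nhds z hη))
    have hQ' : ∀ k, Q k ∈ C := fun k => by
      by_contra hk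
      exact (hQP k).1 fun h => absurd h hk
    have hex : ∀ k, ∃ a, a ∈ UpSet f x ν (Q k) ∩ Metric.closedBall z η ∧ η ≤ dist a z ∧
        a ∈ SC ∧ a ∉ ShatSet f x ν (Q k) := by
      intro k
      obtain ⟨⟨Y, hY, hYs, hqY, a, haY, haη, haS⟩, -⟩ := hsides (Q k) (hQ' k) (hQP k).2
      refine ⟨a, hYs haY, haη, ?_, haS⟩
      by_contra haSC
      exact (hQP k).1 fun _ => ⟨Y, hY, hYs, hqY, a, haY, haSC⟩
    choose a ha1 ha2 ha3 ha4 using hex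
    obtain ⟨ψ, hψ, t, ht, hev⟩ := hlim Q a hQ' hQ ha1 ha2 ha3
    obtain ⟨k, hk1, hk2⟩ := (hev.and
      ((hQ.comp hψ.tendsto_atTop).eventually (hdomz t ht))).exists
    exact ha4 (ψ k) (hk2 (hQ' _) hk1)
  -- inner branch enters `Ŝ_r`
  have hinner : ∀ᶠ q in nhds z ×ˢ nhds z, q.1 ∈ C → q.2 ∈ C → ∃ Y : Set M, IsPreconnected Y ∧
      Y ⊆ UpSet f x ν q.1 ∩ Metric.closedBall z η ∧ q.1 ∈ Y ∧ ∃ a ∈ Y, a ∈ ShatSet f x ν q.2 := by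
    rw [← nhds_prod_eq]
    by_contra hcon
    rw [Filter.not_eventually] at hcon
    have hbn : ∀ᶠ q : M × M in nhds (z, z), q.1 ∈ Metric.ball z η :=
      (continuous_fst.tendsto (z, z)).eventually (Metric.ball_mem_nhds z hη)
    obtain ⟨QR, hQR, hQP⟩ := Filter.exists_seq_forall_of_frequently (hcon.and_eventually hbn)
    have hQ : Filter.Tendsto (fun k => (QR k).1) Filter.atTop (nhds z) :=
      (continuous_fst.tendsto (z, z)).comp hQR
    have hR : Filter.Tendsto (fun k => (QR k).2) Filter.atTop (nhds z) :=
      (continuous_snd.tendsto (z, z)).comp hQR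
    have hQ' : ∀ k, (QR k).1 ∈ C := fun k => by
      by_contra hk
      exact (hQP k).1 fun h => absurd h hk
    have hR' : ∀ k, (QR k).2 ∈ C := fun k => by
      by_contra hk
      exact (hQP k).1 fun _ h => absurd h hk
    have hex : ∀ k, ∃ a, a ∈ UpSet f x ν (QR k).1 ∩ Metric.closedBall z η ∧ η ≤ dist a z ∧
        a ∈ SC ∧ a ∉ ShatSet f x ν (QR k).2 := by
      intro k
      obtain ⟨-, Y, hY, hYs, hqY, a, haY, haη, haS⟩ := hsides (QR k).1 (hQ' k) (hQP k).2
      refine ⟨a, hYs haY, haη, hShatSC _ (hQ' k) haS, ?_⟩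
      intro haR
      exact (hQP k).1 fun _ _ => ⟨Y, hY, hYs, hqY, a, haY, haR⟩
    choose a ha1 ha2 ha3 ha4 using hex
    obtain ⟨ψ, hψ, t, ht, hev⟩ := hlim _ a hQ' hQ ha1 ha2 ha3
    obtain ⟨k, hk1, hk2⟩ := (hev.and
      ((hR.comp hψ.tendsto_atTop).eventually (hdomz t ht))).exists
    exact ha4 (ψ k) (hk2 (hR' _) hk1)
  -- conclusion
  obtain ⟨P₁, hP₁, P₂, hP₂, hPP⟩ := Filter.eventually_prod_iff.1 hinner
  obtain ⟨V, hV, hVo, hzV⟩ := _root_.mem_nhds_iff.1 (Filter.inter_mem (Filter.inter_mem hP₁ hP₂) houter)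
  refine ⟨V, hVo, hzV, ?_⟩
  rintro q ⟨hqV, hqC⟩ r ⟨hrV, hrC⟩
  obtain ⟨Y, hY, hYs, hqY, a, haY, haSC⟩ := (hV hqV).2 hqC
  obtain ⟨Y', hY', hYs', hqY', a', haY', haS'⟩ := hPP (hV hqV).1.1 (hV hrV).1.2 hqC hrC
  have hqq : q ∈ ShatSet f x ν q := Sp_sub_Shat (hself q hqC)
  constructor
  · have hfin : ∀ W : Set M, W ⊆ UpSet f x ν q ∩ Metric.closedBall z η →
        (W ∩ SpSet f x ν r).Nonempty →
        (UpSet f x ν q ∩ SpSet f x ν r ∩ Metric.ball z ε' ∩ SC).Nonempty := by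
      rintro W hW ⟨s, hsW, hs⟩
      exact ⟨s, ⟨⟨(hW hsW).1, hs⟩, hzε' (hW hsW).2⟩, hShatSC r hrC (Sp_sub_Shat hs)⟩
    by_cases hqr : q ∈ ShatSet f x ν r
    · exact hfin Y hYs (meets_Sp hY (fun y hy => hzη (hYs hy).2) hqY haY hqr
        (fun h => haSC (hShatSC r hrC h)))
    · exact hfin Y' hYs' (meets_Sp hY' (fun y hy => hzη (hYs' hy).2) haY' hqY' haS' hqr)
  · obtain ⟨s, hsY, hs⟩ := meets_frontier hY hqY haY (hShatSC q hqC hqq) haSC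
    exact ⟨s, ⟨(hYs hsY).1, hs⟩, hzε' (hYs hsY).2⟩
end
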